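/- arXiv:2208.13117 — 5 statements merged into one kernel-verified Lean document; each statement's English description precedes it below -/
import Mathlib

section
/- Let φ: Λ₁ → Λ₂ be an injective ℂ-algebra homomorphism and ψ: Ŵ₁ → Ŵ₂ a monoid homomorphism such that φ(w(a)) = ψ(w)(φ(a)) for all a ∈ Λ₁, w ∈ Ŵ₁, and let Φ: L₁#Ŵ₁ → L₂#Ŵ₂ be the induced algebra homomorphism Φ(Σ m_{f_w}∘w) = Σ m_{φ̂(f_w)}∘ψ(w). Suppose there is a ℂ-subspace U ⊆ Λ₂ such that the multiplication map φ(Λ₁) ⊗_ℂ U → Λ₂, φ(a) ⊗ u ↦ φ(a)·u, is a ℂ-linear isomorphism, and such that ψ(w)(φ(a)·u) = φ(w(a))·u for all w ∈ Ŵ₁, a ∈ Λ₁, u ∈ U. Then Φ maps the standard flag order 𝓕_{Λ₁} into the standard flag order 𝓕_{Λ₂}; that is, if X ∈ L₁#Ŵ₁ satisfies X(Λ₁) ⊆ Λ₁, then Φ(X)(Λ₂) ⊆ Λ₂. -/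
/-!
Statement 1: In the setting of the sufficient-condition theorem, if moreover there is a
ℂ-subspace `U ⊆ Λ₂` such that the multiplication map `φ(Λ₁) ⊗_ℂ U → Λ₂`, `φ(a) ⊗ u ↦ φ(a)·u`,
is a ℂ-linear isomorphism (encoded: the map `Λ₁ ⊗_ℂ U → L₂`, `a ⊗ u ↦ φ(a)·u`, is injective
with range exactly `Λ₂`; note `φ` is injective so `Λ₁ ≅ φ(Λ₁)`), and
`ψ(w)(φ(a)·u) = φ(w(a))·u` for all `w ∈ Ŵ₁`, `a ∈ Λ₁`, `u ∈ U`, then the induced algebra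
homomorphism `Φ : L₁#Ŵ₁ → L₂#Ŵ₂` maps the standard flag order `𝓕_{Λ₁}` into `𝓕_{Λ₂}`:
if `X(Λ₁) ⊆ Λ₁` then `Φ(X)(Λ₂) ⊆ Λ₂`.
-/

open scoped TensorProduct

noncomputable section

/-- `gen f w` is the ℂ-linear endomorphism `m_f ∘ w` of `L`. -/
def gen {L : Type*} [Field L] [Algebra ℂ L] (f : L) (w : L ≃ₐ[ℂ] L) : Module.End ℂ L :=
  (LinearMap.mulLeft ℂ f) ∘ₗ (w.toLinearMap)

/-- The skew monoid ring `L # W` realized inside `End_ℂ(L)`. -/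
def skew {L : Type*} [Field L] [Algebra ℂ L] (W : Submonoid (L ≃ₐ[ℂ] L)) :
    Subalgebra ℂ (Module.End ℂ L) :=
  Algebra.adjoin ℂ { X | ∃ (f : L) (w : L ≃ₐ[ℂ] L), w ∈ W ∧ X = gen f w }

lemma gen_mem_skew {L : Type*} [Field L] [Algebra ℂ L] {W : Submonoid (L ≃ₐ[ℂ] L)}
    (f : L) {w : L ≃ₐ[ℂ] L} (hw : w ∈ W) : gen f w ∈ skew W :=
  Algebra.subset_adjoin ⟨f, w, hw, rfl⟩

/-- The multiplication map `Λ₁ ⊗_ℂ U → L₂`, `a ⊗ u ↦ φ(a)·u`. -/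
def mulMap {L₁ L₂ : Type*} [Field L₁] [Algebra ℂ L₁] [Field L₂] [Algebra ℂ L₂]
    (Λ₁ : Subalgebra ℂ L₁) (U : Submodule ℂ L₂) (φ : L₁ →ₐ[ℂ] L₂) :
    (↥Λ₁ ⊗[ℂ] ↥U) →ₗ[ℂ] L₂ :=
  TensorProduct.lift
    (((LinearMap.mul ℂ L₂) ∘ₗ (φ.toLinearMap ∘ₗ Λ₁.val.toLinearMap)).compl₂ U.subtype)

/-!
Each generator `m_f ∘ w` of `L₁ # W₁` and its image `m_{φ f} ∘ ψ w` are intertwined by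
`a ↦ φ a * u` for every `u ∈ U`: the action hypothesis says so on `Λ₁`, and clearing denominators
extends it to `L₁`. Intertwining is preserved by sums and products, so `Φ X (φ a * u) = φ (X a) * u`
for all `X`. Thus on `Λ₂ = φ(Λ₁) · U` the operator `Φ X` is induced by `X ⊗ id` on `Λ₁ ⊗ U`.
-/

lemma map_mul_eq_map_mul_of_isLocalization {R S P : Type*} [CommSemiring R] [CommSemiring S]
    [Algebra R S] [CommSemiring P] (M : Submonoid R) [IsLocalization M S] {f g : S →+* P} {u v : P}
    (h : ∀ r : R, f (algebraMap R S r) * v = g (algebraMap R S r) * u) (x : S) :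
    f x * v = g x * u := by
  have hvu : v = u := by simpa using h 1
  subst hvu
  obtain ⟨⟨r, s⟩, hx⟩ := IsLocalization.surj M x
  have hs : IsUnit (f (algebraMap R S s)) := (IsLocalization.map_units S s).map f
  apply hs.mul_right_cancel
  calc f x * v * f (algebraMap R S s)
    _ = f (algebraMap R S r) * v := by rw [mul_right_comm, ← map_mul, hx]
    _ = g (algebraMap R S r) * v := h r
    _ = g x * (g (algebraMap R S s) * v) := by rw [← hx, map_mul, mul_assoc]
    _ = g x * (f (algebraMap R S s) * v) := by rw [h s]
    _ = g x * v * f (algebraMap R S s) := by ring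

lemma comp_eq_comp_of_adjoin_eq_top {R A M N : Type*} [CommSemiring R] [Semiring A] [Algebra R A]
    [AddCommMonoid M] [Module R M] [AddCommMonoid N] [Module R N]
    {ρ : A →ₐ[R] Module.End R M} {σ : A →ₐ[R] Module.End R N} {T : M →ₗ[R] N} {s : Set A}
    (hs : Algebra.adjoin R s = ⊤) (h : ∀ x ∈ s, σ x ∘ₗ T = T ∘ₗ ρ x) (x : A) :
    σ x ∘ₗ T = T ∘ₗ ρ x := by
  have hx : x ∈ Algebra.adjoin R s := hs ▸ Algebra.mem_top
  induction hx using Algebra.adjoin_induction with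
  | mem x hx => exact h x hx
  | algebraMap r => ext m; simp [Module.algebraMap_end_apply]
  | add x y _ _ ihx ihy => rw [map_add, map_add, LinearMap.add_comp, LinearMap.comp_add, ihx, ihy]
  | mul x y _ _ ihx ihy =>
    rw [map_mul, map_mul, Module.End.mul_eq_comp, Module.End.mul_eq_comp, LinearMap.comp_assoc, ihy,
      ← LinearMap.comp_assoc, ihx, LinearMap.comp_assoc]

section SkewMonoidRing

variable {L₁ L₂ : Type*} [Field L₁] [Algebra ℂ L₁] [Field L₂] [Algebra ℂ L₂]

lemma gen_map_apply_map_mul (φ : L₁ →ₐ[ℂ] L₂) {w₁ : L₁ ≃ₐ[ℂ] L₁} {w₂ : L₂ ≃ₐ[ℂ] L₂} {u : L₂}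
    (Λ₁ : Subalgebra ℂ L₁) [IsFractionRing Λ₁ L₁]
    (hu : ∀ a ∈ Λ₁, w₂ (φ a * u) = φ (w₁ a) * u) (f x : L₁) :
    gen (φ f) w₂ (φ x * u) = φ (gen f w₁ x) * u := by
  have hx : w₂ (φ x * u) = φ (w₁ x) * u := by
    rw [map_mul]
    exact map_mul_eq_map_mul_of_isLocalization (nonZeroDivisors Λ₁)
      (f := (w₂ : L₂ →+* L₂).comp φ) (g := (φ : L₁ →+* L₂).comp w₁)
      (fun a => (map_mul w₂ _ _).symm.trans (hu a a.2)) x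
  change φ f * w₂ (φ x * u) = φ (f * w₁ x) * u
  rw [hx, map_mul, mul_assoc]

lemma skew_map_apply_map_mul {W₁ : Submonoid (L₁ ≃ₐ[ℂ] L₁)} {W₂ : Submonoid (L₂ ≃ₐ[ℂ] L₂)}
    (φ : L₁ →ₐ[ℂ] L₂) (Φ : skew W₁ →ₐ[ℂ] skew W₂) {u : L₂}
    (hgen : ∀ (f : L₁) (w : L₁ ≃ₐ[ℂ] L₁) (hw : w ∈ W₁) (x : L₁),
      (Φ ⟨gen f w, gen_mem_skew f hw⟩ : Module.End ℂ L₂) (φ x * u) = φ (gen f w x) * u)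
    (X : skew W₁) (x : L₁) :
    (Φ X : Module.End ℂ L₂) (φ x * u) = φ ((X : Module.End ℂ L₁) x) * u := by
  refine LinearMap.congr_fun (comp_eq_comp_of_adjoin_eq_top (ρ := (skew W₁).val)
    (σ := (skew W₂).val.comp Φ) (T := LinearMap.mulRight ℂ u ∘ₗ φ.toLinearMap)
    Algebra.adjoin_adjoin_coe_preimage ?_ X) x
  rintro ⟨_, _⟩ ⟨f, w, hw, rfl⟩
  exact LinearMap.ext (hgen f w hw)

lemma apply_mem_range_mulMap {Λ₁ : Subalgebra ℂ L₁} {U : Submodule ℂ L₂} {φ : L₁ →ₐ[ℂ] L₂}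
    {X : Module.End ℂ L₁} {Y : Module.End ℂ L₂} (hX : ∀ a ∈ Λ₁, X a ∈ Λ₁)
    (hXY : ∀ a ∈ Λ₁, ∀ u ∈ U, Y (φ a * u) = φ (X a) * u) {b : L₂}
    (hb : b ∈ LinearMap.range (mulMap Λ₁ U φ)) : Y b ∈ LinearMap.range (mulMap Λ₁ U φ) := by
  have hcomp : Y ∘ₗ mulMap Λ₁ U φ = mulMap Λ₁ U φ ∘ₗ
      (X.restrict (p := Λ₁.toSubmodule) (q := Λ₁.toSubmodule) hX).rTensor U :=
    TensorProduct.ext' fun a u => hXY a a.2 u u.2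
  obtain ⟨t, rfl⟩ := hb
  exact ⟨_, (LinearMap.congr_fun hcomp t).symm⟩

theorem morphism_restricts_to_standard_flag_orders_general
    (Λ₁ : Subalgebra ℂ L₁) [IsFractionRing Λ₁ L₁] (Λ₂ : Submodule ℂ L₂)
    (W₁ : Submonoid (L₁ ≃ₐ[ℂ] L₁)) (W₂ : Submonoid (L₂ ≃ₐ[ℂ] L₂))
    (φ : L₁ →ₐ[ℂ] L₂) (ψ : W₁ →* W₂) (Φ : skew W₁ →ₐ[ℂ] skew W₂)
    (hΦ : ∀ (f : L₁) (w : L₁ ≃ₐ[ℂ] L₁) (hw : w ∈ W₁),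
      (Φ ⟨gen f w, gen_mem_skew f hw⟩ : Module.End ℂ L₂)
        = gen (φ f) ((ψ ⟨w, hw⟩ : W₂) : L₂ ≃ₐ[ℂ] L₂))
    (U : Submodule ℂ L₂) (hrange : LinearMap.range (mulMap Λ₁ U φ) = Λ₂)
    (haction : ∀ (w : W₁) (a : L₁), a ∈ Λ₁ → ∀ u ∈ U,
      ((ψ w : W₂) : L₂ ≃ₐ[ℂ] L₂) (φ a * u) = φ ((w : L₁ ≃ₐ[ℂ] L₁) a) * u)
    (X : skew W₁) (hX : ∀ a ∈ Λ₁, (X : Module.End ℂ L₁) a ∈ Λ₁) :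
    ∀ b ∈ Λ₂, (Φ X : Module.End ℂ L₂) b ∈ Λ₂ := by
  have hXΦ : ∀ a ∈ Λ₁, ∀ u ∈ U,
      (Φ X : Module.End ℂ L₂) (φ a * u) = φ ((X : Module.End ℂ L₁) a) * u := by
    refine fun a _ u hu => skew_map_apply_map_mul φ Φ (fun f w hw x => ?_) X a
    rw [hΦ f w hw]
    exact gen_map_apply_map_mul φ Λ₁ (fun a ha => haction ⟨w, hw⟩ a ha u hu) f x
  subst hrange
  exact fun b => apply_mem_range_mulMap hX hXΦ

end SkewMonoidRing

theorem morphism_restricts_to_standard_flag_orders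
    {L₁ L₂ : Type*} [Field L₁] [Algebra ℂ L₁] [Field L₂] [Algebra ℂ L₂]
    (Λ₁ : Subalgebra ℂ L₁) (Λ₂ : Subalgebra ℂ L₂)
    [IsFractionRing Λ₁ L₁] [IsFractionRing Λ₂ L₂]
    (W₁ : Submonoid (L₁ ≃ₐ[ℂ] L₁)) (W₂ : Submonoid (L₂ ≃ₐ[ℂ] L₂))
    (hW₁ : ∀ w ∈ W₁, ∀ x : L₁, x ∈ Λ₁ ↔ w x ∈ Λ₁)
    (hW₂ : ∀ w ∈ W₂, ∀ x : L₂, x ∈ Λ₂ ↔ w x ∈ Λ₂)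
    (φ : L₁ →ₐ[ℂ] L₂) (hφ : ∀ x ∈ Λ₁, φ x ∈ Λ₂)
    (ψ : W₁ →* W₂)
    (hcompat : ∀ (w : W₁) (a : L₁), a ∈ Λ₁ →
      φ ((w : L₁ ≃ₐ[ℂ] L₁) a) = ((ψ w : W₂) : L₂ ≃ₐ[ℂ] L₂) (φ a))
    -- the induced algebra homomorphism Φ
    (Φ : skew W₁ →ₐ[ℂ] skew W₂)
    (hΦ : ∀ (f : L₁) (w : L₁ ≃ₐ[ℂ] L₁) (hw : w ∈ W₁),
      (Φ ⟨gen f w, gen_mem_skew f hw⟩ : Module.End ℂ L₂)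
        = gen (φ f) ((ψ ⟨w, hw⟩ : W₂) : L₂ ≃ₐ[ℂ] L₂))
    -- the subspace U with Λ₂ ≅ φ(Λ₁) ⊗ U via multiplication
    (U : Submodule ℂ L₂) (hU : U ≤ Λ₂.toSubmodule)
    (hinj : Function.Injective (mulMap Λ₁ U φ))
    (hrange : LinearMap.range (mulMap Λ₁ U φ) = Λ₂.toSubmodule)
    -- the action of ψ(Ŵ₁) on the decomposition
    (haction : ∀ (w : W₁) (a : L₁), a ∈ Λ₁ → ∀ u ∈ U,
      ((ψ w : W₂) : L₂ ≃ₐ[ℂ] L₂) (φ a * u) = φ ((w : L₁ ≃ₐ[ℂ] L₁) a) * u) :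
    ∀ X : skew W₁, (∀ a ∈ Λ₁, (X : Module.End ℂ L₁) a ∈ Λ₁) →
      ∀ b ∈ Λ₂, (Φ X : Module.End ℂ L₂) b ∈ Λ₂ :=
  morphism_restricts_to_standard_flag_orders_general Λ₁ Λ₂.toSubmodule W₁ W₂ φ ψ Φ hΦ U hrange
    haction
end
end

section
/- Let Λ be an integral domain and commutative ℂ-algebra with L = Frac(Λ), and let Ŵ be a monoid of ℂ-algebra automorphisms of Λ. If X₁, …, Xₙ ∈ L#Ŵ are linearly independent over L (where f ∈ L acts on L#Ŵ by X ↦ m_f∘X), then there exist a₁, …, aₙ ∈ Λ such that the n×n matrix (X_i(a_j))_{i,j=1}^n over L has nonzero determinant. -/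
/-!
Statement 8: If X₁, …, Xₙ ∈ L#Ŵ are linearly independent over L (with f ∈ L acting by
X ↦ m_f ∘ X), then there exist a₁, …, aₙ ∈ Λ such that det (X_i(a_j)) ≠ 0.
-/

noncomputable section

/-!
An element of `L # W` is an `L`-linear combination of automorphisms of `L`. Distinct automorphisms
restrict to distinct characters `Λ → L`, because `L` is a localization of `Λ`, and distinct
characters are linearly independent over `L`; so `Xᵢ ↦ Xᵢ|_Λ` preserves linear independence.
Independent functions `x₁, …, xₙ : Λ → L` admit points with `det (xᵢ(aⱼ)) ≠ 0`, since the vectors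
`(x₁(a), …, xₙ(a))` then span `Lⁿ` and a basis can be chosen among them.
-/

section AlgHomSpan

variable {R A B C : Type*} [CommSemiring R] [Semiring A] [CommSemiring B] [CommSemiring C]
  [Algebra R A] [Algebra R B] [Algebra R C]

variable (R A B) in
/-- The `B`-submodule of `A →ₗ[R] B` spanned by the `R`-algebra homomorphisms `A → B`. For a field
`L` over `ℂ` it contains the skew monoid rings `L # W` of all monoids `W` of automorphisms of `L`,
and unlike `skew W` it comes with its `L`-module structure. -/
def algHomSpan : Submodule B (A →ₗ[R] B) :=
  Submodule.span B (Set.range AlgHom.toLinearMap)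

theorem toLinearMap_mem_algHomSpan (σ : A →ₐ[R] B) : σ.toLinearMap ∈ algHomSpan R A B :=
  Submodule.subset_span ⟨σ, rfl⟩

theorem toLinearMap_comp_mem_algHomSpan (σ : B →ₐ[R] C) {Y : A →ₗ[R] B}
    (hY : Y ∈ algHomSpan R A B) : σ.toLinearMap ∘ₗ Y ∈ algHomSpan R A C := by
  induction hY using Submodule.span_induction with
  | mem Y hY =>
    obtain ⟨τ, rfl⟩ := hY
    exact toLinearMap_mem_algHomSpan (σ.comp τ)
  | zero => simp only [LinearMap.comp_zero, zero_mem]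
  | add Y Z _ _ hY hZ => simpa only [LinearMap.comp_add] using add_mem hY hZ
  | smul b Y _ hY =>
    have hsmul : σ.toLinearMap ∘ₗ (b • Y) = σ b • (σ.toLinearMap ∘ₗ Y) := by
      ext a
      simp
    exact hsmul ▸ Submodule.smul_mem _ (σ b) hY

theorem comp_mem_algHomSpan {X : B →ₗ[R] C} {Y : A →ₗ[R] B} (hX : X ∈ algHomSpan R B C)
    (hY : Y ∈ algHomSpan R A B) : X ∘ₗ Y ∈ algHomSpan R A C := by
  induction hX using Submodule.span_induction with
  | mem X hX =>
    obtain ⟨σ, rfl⟩ := hX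
    exact toLinearMap_comp_mem_algHomSpan σ hY
  | zero => simp only [LinearMap.zero_comp, zero_mem]
  | add X Z _ _ hX hZ => simpa only [LinearMap.add_comp] using add_mem hX hZ
  | smul c X _ hX => simpa only [LinearMap.smul_comp] using Submodule.smul_mem _ c hX

end AlgHomSpan

theorem mem_algHomSpan_of_mem_skew {L : Type*} [Field L] [Algebra ℂ L]
    {W : Submonoid (L ≃ₐ[ℂ] L)} {X : Module.End ℂ L} (hX : X ∈ skew W) :
    X ∈ algHomSpan ℂ L L := by
  induction hX using Algebra.adjoin_induction with
  | mem X hX =>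
    obtain ⟨f, w, -, rfl⟩ := hX
    exact Submodule.smul_mem _ f (toLinearMap_mem_algHomSpan (w : L →ₐ[ℂ] L))
  | algebraMap r =>
    rw [Algebra.algebraMap_eq_smul_one]
    exact Submodule.smul_of_tower_mem _ r (toLinearMap_mem_algHomSpan (AlgHom.id ℂ L))
  | add X Y _ _ hX hY => exact add_mem hX hY
  | mul X Y _ _ hX hY => exact comp_mem_algHomSpan hX hY

section Restriction

variable {R A B : Type*} [CommSemiring R] [CommSemiring A] [CommSemiring B]
  [Algebra R B] [Algebra A B]

variable (R A B) in
/-- Restriction of `R`-linear maps `B → F` along `algebraMap A B`, as an `F`-linear map. The values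
are plain functions, so that `A` need not be an `R`-algebra. -/
def restrictAlgebraMap (F : Type*) [CommSemiring F] [Algebra R F] : (B →ₗ[R] F) →ₗ[F] A → F :=
  LinearMap.funLeft F F (algebraMap A B) ∘ₗ LinearMap.ltoFun R B F F

variable {F : Type*} [CommRing F] [IsDomain F] [Algebra R F]

theorem linearIndependent_restrictAlgebraMap_algHom (M : Submonoid A) [IsLocalization M B] :
    LinearIndependent F
      (restrictAlgebraMap R A B F ∘ (AlgHom.toLinearMap : (B →ₐ[R] F) → B →ₗ[R] F)) := by
  let toCharacter (σ : B →ₐ[R] F) : A →* F := (σ : B →* F).comp (algebraMap A B : A →* B)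
  have toCharacter_injective : Function.Injective toCharacter := fun σ τ h =>
    AlgHom.coe_ringHom_injective <|
      IsLocalization.ringHom_ext M (RingHom.ext fun a => DFunLike.congr_fun h a)
  exact (linearIndependent_monoidHom A F).comp toCharacter toCharacter_injective

theorem disjoint_algHomSpan_ker_restrictAlgebraMap (M : Submonoid A) [IsLocalization M B] :
    Disjoint (algHomSpan R B F) (LinearMap.ker (restrictAlgebraMap R A B F)) :=
  Submodule.range_ker_disjoint (linearIndependent_restrictAlgebraMap_algHom M)

theorem linearIndependent_restrictAlgebraMap (M : Submonoid A) [IsLocalization M B]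
    {ι : Type*} {X : ι → B →ₗ[R] F} (hX : ∀ i, X i ∈ algHomSpan R B F)
    (hli : LinearIndependent F X) :
    LinearIndependent F (restrictAlgebraMap R A B F ∘ X) :=
  hli.map <| (disjoint_algHomSpan_ker_restrictAlgebraMap M).mono_left <|
    Submodule.span_le.mpr (Set.range_subset_iff.mpr hX)

end Restriction

theorem exists_det_ne_zero_of_linearIndependent {F S ι : Type*} [Field F] [Fintype ι]
    [DecidableEq ι] {x : ι → S → F} (hx : LinearIndependent F x) :
    ∃ a : ι → S, (Matrix.of fun i j => x i (a j)).det ≠ 0 := by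
  have hspan : Submodule.span F (Set.range (flip x)) = ⊤ :=
    span_flip_eq_top_iff_linearIndependent.mpr hx
  obtain ⟨κ, a, -, hspan_a, hli_a⟩ := exists_linearIndependent' F (flip x)
  let e : ι ≃ κ :=
    (Pi.basisFun F ι).indexEquiv (Module.Basis.mk hli_a (hspan_a.trans hspan).ge)
  have hcol : LinearIndependent F (Matrix.of fun i j => x i (a (e j))).col :=
    hli_a.comp e e.injective
  exact ⟨a ∘ e, ((Matrix.isUnit_iff_isUnit_det _).mp
    (Matrix.linearIndependent_cols_iff_isUnit.mp hcol)).ne_zero⟩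

theorem nonzero_determinant_general {R A B F ι : Type*} [CommSemiring R] [CommSemiring A]
    [CommSemiring B] [Field F] [Algebra R B] [Algebra A B] [Algebra R F] [Fintype ι]
    [DecidableEq ι] (M : Submonoid A) [IsLocalization M B] {X : ι → B →ₗ[R] F}
    (hX : ∀ i, X i ∈ algHomSpan R B F) (hli : LinearIndependent F X) :
    ∃ a : ι → A, (Matrix.of fun i j => X i (algebraMap A B (a j))).det ≠ 0 :=
  exists_det_ne_zero_of_linearIndependent (linearIndependent_restrictAlgebraMap M hX hli)

theorem nonzero_determinant
    {L : Type*} [Field L] [Algebra ℂ L]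
    (Λ : Subalgebra ℂ L) [IsFractionRing Λ L]
    (W : Submonoid (L ≃ₐ[ℂ] L))
    (hW : ∀ w ∈ W, ∀ x : L, x ∈ Λ ↔ w x ∈ Λ)
    (n : ℕ) (X : Fin n → Module.End ℂ L)
    (hXmem : ∀ i, X i ∈ skew W)
    -- linear independence over L, where f ∈ L acts by X ↦ m_f ∘ X
    (hindep : ∀ c : Fin n → L,
      (∑ i, (LinearMap.mulLeft ℂ (c i)) ∘ₗ (X i)) = 0 → ∀ i, c i = 0) :
    ∃ a : Fin n → L, (∀ j, a j ∈ Λ) ∧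
      (Matrix.of fun i j => (X i) (a j)).det ≠ 0 := by
  obtain ⟨a, ha⟩ := nonzero_determinant_general (nonZeroDivisors Λ)
    (fun i => mem_algHomSpan_of_mem_skew (hXmem i)) (Fintype.linearIndependent_iff.mpr hindep)
  exact ⟨fun j => a j, fun j => (a j).2, ha⟩
end
end

section
/- For i = 1,2 let Λᵢ be an integral domain and commutative ℂ-algebra with Lᵢ = Frac(Λᵢ), and Ŵᵢ a group of ℂ-algebra automorphisms of Λᵢ. Assume Λ = Λ₁ ⊗_ℂ Λ₂ is an integral domain, let L = Frac(Λ), let Ŵ = Ŵ₁ × Ŵ₂ act on Λ componentwise, and let ι: L₁ ⊗_ℂ L₂ → L denote the canonical injection. Then the ℂ-linear map ψ: (L₁#Ŵ₁) ⊗_ℂ (L₂#Ŵ₂) → L#Ŵ determined by ψ((m_f∘w₁) ⊗ (m_g∘w₂)) = m_{ι(f⊗g)}∘(w₁,w₂) is an injective ℂ-algebra homomorphism, and ψ maps 𝓕_{Λ₁} ⊗_ℂ 𝓕_{Λ₂} into the standard flag order 𝓕_Λ; in particular 𝓕_{Λ₁} ⊗_ℂ 𝓕_{Λ₂} embeds into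 𝓕_Λ as ℂ-algebras. -/
/-!
Statement 10: For fraction-field data (Λᵢ ⊆ Lᵢ, Ŵᵢ a group of automorphisms of Λᵢ extended
to Lᵢ) with Λ = Λ₁ ⊗_ℂ Λ₂ a domain, L = Frac(Λ), ι : L₁ ⊗_ℂ L₂ → L the canonical injection
and Ŵ = Ŵ₁ × Ŵ₂ acting componentwise (via the extension homomorphism `ext`, determined by
`ext p (ι₁ f · ι₂ g) = ι₁(p₁ f) · ι₂(p₂ g)`), the ℂ-linear map
ψ((m_f∘w₁) ⊗ (m_g∘w₂)) = m_{ι(f⊗g)} ∘ (w₁,w₂) is an injective ℂ-algebra homomorphism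
(L₁#Ŵ₁) ⊗_ℂ (L₂#Ŵ₂) → L#Ŵ mapping 𝓕_{Λ₁} ⊗_ℂ 𝓕_{Λ₂} into 𝓕_Λ.

Here Λ = Λ₁ ⊗_ℂ Λ₂ is realized as the ℂ-subalgebra of L generated by ι₁(Λ₁) ∪ ι₂(Λ₂)
("Λ₁ ⊗ Λ₂ is a domain" being encoded by the injectivity of the canonical map
L₁ ⊗_ℂ L₂ → L, and "L = Frac(Λ)" by the hypothesis `hfrac`).
-/

set_option synthInstance.maxHeartbeats 1000000
set_option maxHeartbeats 1000000

open scoped TensorProduct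

noncomputable section

/-- The standard flag order `𝓕_Λ = {X ∈ L#W : X(Λ) ⊆ Λ}`. -/
def flag {L : Type*} [Field L] [Algebra ℂ L] (Λ : Subalgebra ℂ L)
    (W : Submonoid (L ≃ₐ[ℂ] L)) : Set (Module.End ℂ L) :=
  { X | X ∈ skew W ∧ ∀ a ∈ Λ, X a ∈ Λ }

/-- `Λ = Λ₁ ⊗ Λ₂`, realized inside `L` as the subalgebra generated by `ι₁(Λ₁) ∪ ι₂(Λ₂)`. -/
def tensorSub {L₁ L₂ L : Type*} [Field L₁] [Algebra ℂ L₁] [Field L₂] [Algebra ℂ L₂]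
    [Field L] [Algebra ℂ L] (Λ₁ : Subalgebra ℂ L₁) (Λ₂ : Subalgebra ℂ L₂)
    (ι₁ : L₁ →ₐ[ℂ] L) (ι₂ : L₂ →ₐ[ℂ] L) : Subalgebra ℂ L :=
  Algebra.adjoin ℂ ((ι₁ '' (Λ₁ : Set L₁)) ∪ (ι₂ '' (Λ₂ : Set L₂)))

/-!
By Dedekind's independence of automorphisms, `skew W` is the abstract skew monoid algebra `L#W`, so
an embedding `L → L'` and an action of `W` on `L'` extending that on `L` give a homomorphism
`skew W → End L'`. The homomorphisms obtained from `L₁ → L` and from `L₂ → L` have commuting images,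
which yields `ψ` by the universal property of the tensor product of algebras. On the image of
`L₁ ⊗ L₂` in `L` the endomorphism `ψ (X₁ ⊗ X₂)` acts as `X₁ ⊗ X₂`, so injectivity of `ψ` reduces to
that of `End L₁ ⊗ End L₂ → End (L₁ ⊗ L₂)`.
-/

section HomTensorHom

variable (K M N P Q : Type*) [Field K] [AddCommGroup M] [Module K M] [AddCommGroup N] [Module K N]
  [AddCommGroup P] [Module K P] [AddCommGroup Q] [Module K Q]

lemma homTensorHomMap_injective :
    Function.Injective (TensorProduct.homTensorHomMap (.id K) M N P Q) := by
  rw [injective_iff_map_eq_zero]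
  intro t ht
  let b := Module.Basis.ofVectorSpace K (N →ₗ[K] Q)
  obtain ⟨a, rfl⟩ := TensorProduct.eq_repr_basis_right b t
  suffices ha : a = 0 by simp only [ha, Finsupp.sum_zero_index]
  ext j m
  refine (Module.forall_dual_apply_eq_zero_iff K _).mp fun φ ↦ ?_
  have contraction_eq_zero :
      Finsupp.linearCombination K b (a.mapRange (fun c ↦ φ (c m)) (by simp)) = 0 := by
    ext n
    have hmn := congrArg (TensorProduct.lid K Q ∘ TensorProduct.map φ LinearMap.id)
      (LinearMap.congr_fun ht (m ⊗ₜ[K] n))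
    rw [Finsupp.linearCombination_apply, Finsupp.sum_mapRange_index (by simp)]
    simpa [Finsupp.sum, LinearMap.sum_apply] using hmn
  simpa using DFunLike.congr_fun
    (linearIndependent_iff.mp b.linearIndependent _ contraction_eq_zero) j

end HomTensorHom

section CovariantRep

variable {K A B G : Type*} [CommSemiring K] [Semiring A] [Algebra K A] [Semiring B] [Algebra K B]
  [Monoid G] [MulSemiringAction G A] [SMulCommClass G K A]

/-- The representation on `B` of the skew monoid algebra `A#G` given by a homomorphism `ι : A → B`
and an action `σ` of `G` on `B` for which `ι` is equivariant: `a ∈ A` acts as multiplication by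
`ι a`, and `g ∈ G` acts as `σ g`. -/
def covariantRep (ι : A →ₐ[K] B) (σ : G →* (B ≃ₐ[K] B)) (hσ : ∀ g a, σ g (ι a) = ι (g • a)) :
    SkewMonoidAlgebra A G →ₐ[K] Module.End K B :=
  SkewMonoidAlgebra.liftNCAlgHom ((Algebra.lmul K B).comp ι)
    ((AlgEquiv.toLinearMapHom K B).comp σ) (by intro a g; ext b; simp [hσ])

lemma covariantRep_single (ι : A →ₐ[K] B) (σ : G →* (B ≃ₐ[K] B))
    (hσ : ∀ g a, σ g (ι a) = ι (g • a)) (g : G) (a : A) :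
    covariantRep ι σ hσ (.single g a) = LinearMap.mulLeft K (ι a) ∘ₗ (σ g).toLinearMap :=
  SkewMonoidAlgebra.liftNC_single _ _ g a

end CovariantRep

section Skew

variable {L L' : Type*} [Field L] [Algebra ℂ L] [Field L'] [Algebra ℂ L']

lemma gen_apply (f : L) (w : L ≃ₐ[ℂ] L) (x : L) : gen f w x = f * w x :=
  rfl

lemma gen_mul_gen (f g : L) (v w : L ≃ₐ[ℂ] L) : gen f v * gen g w = gen (f * v g) (v * w) := by
  ext x
  simp [gen_apply, mul_assoc]

variable (W : Submonoid (L ≃ₐ[ℂ] L))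

/-- The tautological representation on `L` of the abstract skew monoid algebra `L#W`. Its image is
`skew W`. -/
def skewRep : SkewMonoidAlgebra L W →ₐ[ℂ] Module.End ℂ L :=
  covariantRep (AlgHom.id ℂ L) W.subtype fun _ _ ↦ rfl

lemma skewRep_single (w : W) (f : L) : skewRep W (.single w f) = gen f w :=
  covariantRep_single _ _ _ w f

lemma skewRep_eq_linearCombination (t : SkewMonoidAlgebra L W) :
    skewRep W t =
      Finsupp.linearCombination L (fun w : W ↦ (w : L →ₐ[ℂ] L).toLinearMap) t.coeff := by
  induction t with
  | single w f => rw [skewRep_single, SkewMonoidAlgebra.coeff_single,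
      Finsupp.linearCombination_single]; rfl
  | add s t hs ht => rw [map_add, hs, ht, SkewMonoidAlgebra.coeff_add, map_add]

lemma skewRep_injective : Function.Injective (skewRep W) := by
  have autos_linearIndependent :
      LinearIndependent L fun w : W ↦ (w : L →ₐ[ℂ] L).toLinearMap :=
    (linearIndependent_algHom_toLinearMap ℂ L L).comp (fun w : W ↦ (w : L →ₐ[ℂ] L))
      (AlgEquiv.coe_toAlgHom_injective.comp Subtype.val_injective)
  intro s t hst
  rw [skewRep_eq_linearCombination, skewRep_eq_linearCombination] at hst
  exact SkewMonoidAlgebra.coeff_injective (autos_linearIndependent hst)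

lemma skewRep_range : (skewRep W).range = skew W := by
  apply le_antisymm
  · rintro _ ⟨t, rfl⟩
    change skewRep W t ∈ skew W
    induction t with
    | single w f => exact skewRep_single W w f ▸ gen_mem_skew f w.2
    | add s t hs ht => exact map_add (skewRep W) s t ▸ add_mem hs ht
  · refine Algebra.adjoin_le ?_
    rintro _ ⟨f, w, hw, rfl⟩
    exact ⟨.single ⟨w, hw⟩ f, skewRep_single W ⟨w, hw⟩ f⟩

/-- The identification of the abstract skew monoid algebra `L#W` with its realization inside
`End_ℂ(L)`. -/
def skewEquiv : SkewMonoidAlgebra L W ≃ₐ[ℂ] skew W :=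
  (AlgEquiv.ofInjective (skewRep W) (skewRep_injective W)).trans
    (Subalgebra.equivOfEq _ _ (skewRep_range W))

lemma skewEquiv_single (w : W) (f : L) :
    skewEquiv W (.single w f) = ⟨gen f w, gen_mem_skew f w.2⟩ :=
  Subtype.ext (skewRep_single W w f)

variable {W}

@[elab_as_elim]
lemma skew_induction {p : skew W → Prop}
    (gen : ∀ (f : L) (w : L ≃ₐ[ℂ] L) (hw : w ∈ W), p ⟨gen f w, gen_mem_skew f hw⟩)
    (add : ∀ X Y, p X → p Y → p (X + Y)) (X : skew W) : p X := by
  obtain ⟨t, rfl⟩ := (skewEquiv W).surjective X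
  induction t with
  | single w f => exact skewEquiv_single W w f ▸ gen f w w.2
  | add s t hs ht => exact map_add (skewEquiv W) s t ▸ add _ _ hs ht

/-- The homomorphism `L#W → End_ℂ(L')`, `m_f ∘ w ↦ m_{ι f} ∘ σ w`, given by an embedding
`ι : L → L'` and an action `σ` of `W` on `L'` that extends the action on `L`. -/
def skewHom (ι : L →ₐ[ℂ] L') (σ : W →* (L' ≃ₐ[ℂ] L')) (hσ : ∀ w f, σ w (ι f) = ι (w.1 f)) :
    skew W →ₐ[ℂ] Module.End ℂ L' :=
  (covariantRep ι σ hσ).comp (skewEquiv W).symm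

variable {ι : L →ₐ[ℂ] L'} {σ : W →* (L' ≃ₐ[ℂ] L')} (hσ : ∀ w f, σ w (ι f) = ι (w.1 f))

lemma skewHom_gen (f : L) {w : L ≃ₐ[ℂ] L} (hw : w ∈ W) :
    skewHom ι σ hσ ⟨gen f w, gen_mem_skew f hw⟩ = gen (ι f) (σ ⟨w, hw⟩) := by
  rw [← skewEquiv_single W ⟨w, hw⟩ f, skewHom, AlgHom.comp_apply, AlgEquiv.coe_toAlgHom,
    AlgEquiv.symm_apply_apply, covariantRep_single, gen]

lemma skewHom_mem_skew {V : Submonoid (L' ≃ₐ[ℂ] L')} (hV : ∀ w, σ w ∈ V) (X : skew W) :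
    skewHom ι σ hσ X ∈ skew V := by
  induction X using skew_induction with
  | gen f w hw => exact skewHom_gen hσ f hw ▸ gen_mem_skew _ (hV _)
  | add X Y hX hY => exact map_add (skewHom ι σ hσ) X Y ▸ add_mem hX hY

lemma skewHom_apply_mul_of_fixed {y : L'} (hy : ∀ w, σ w y = y) (X : skew W) (x : L) :
    skewHom ι σ hσ X (ι x * y) = ι (X.1 x) * y := by
  induction X using skew_induction with
  | gen f w hw => simp only [skewHom_gen hσ f hw, gen_apply, map_mul, hσ, hy, mul_assoc]
  | add X Y hX hY =>
    simp only [map_add, LinearMap.add_apply, hX, hY, AddMemClass.coe_add, add_mul]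

end Skew

section TensorProduct

variable {L₁ L₂ L : Type*} [Field L₁] [Algebra ℂ L₁] [Field L₂] [Algebra ℂ L₂]
  [Field L] [Algebra ℂ L]

lemma toSubmodule_tensorSub (Λ₁ : Subalgebra ℂ L₁) (Λ₂ : Subalgebra ℂ L₂)
    (ι₁ : L₁ →ₐ[ℂ] L) (ι₂ : L₂ →ₐ[ℂ] L) :
    (tensorSub Λ₁ Λ₂ ι₁ ι₂).toSubmodule =
      (Λ₁.map ι₁).toSubmodule * (Λ₂.map ι₂).toSubmodule := by
  rw [Subalgebra.mul_toSubmodule, tensorSub, Algebra.adjoin_union, ← Subalgebra.coe_map,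
    ← Subalgebra.coe_map, Algebra.adjoin_eq, Algebra.adjoin_eq]

variable {W₁ : Submonoid (L₁ ≃ₐ[ℂ] L₁)} {W₂ : Submonoid (L₂ ≃ₐ[ℂ] L₂)}

/-- The action `σ` of `W₁ × W₂` on `L` is componentwise on the image of `L₁ ⊗ L₂`, that is
`(w₁, w₂)(f ⊗ g) = w₁ f ⊗ w₂ g` with `f ⊗ g` read as `ι₁ f * ι₂ g`. -/
def IsComponentwise (ι₁ : L₁ →ₐ[ℂ] L) (ι₂ : L₂ →ₐ[ℂ] L) (σ : W₁ × W₂ →* (L ≃ₐ[ℂ] L)) : Prop :=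
  ∀ p f g, σ p (ι₁ f * ι₂ g) = ι₁ (p.1.1 f) * ι₂ (p.2.1 g)

variable {ι₁ : L₁ →ₐ[ℂ] L} {ι₂ : L₂ →ₐ[ℂ] L} {σ : W₁ × W₂ →* (L ≃ₐ[ℂ] L)}

lemma IsComponentwise.comp_inl_apply_left (hσ : IsComponentwise ι₁ ι₂ σ) (w : W₁) (f : L₁) :
    σ.comp (.inl W₁ W₂) w (ι₁ f) = ι₁ (w.1 f) := by
  simpa using hσ (w, 1) f 1

lemma IsComponentwise.comp_inl_apply_right (hσ : IsComponentwise ι₁ ι₂ σ) (w : W₁) (g : L₂) :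
    σ.comp (.inl W₁ W₂) w (ι₂ g) = ι₂ g := by
  simpa using hσ (w, 1) 1 g

lemma IsComponentwise.comp_inr_apply_left (hσ : IsComponentwise ι₁ ι₂ σ) (w : W₂) (f : L₁) :
    σ.comp (.inr W₁ W₂) w (ι₁ f) = ι₁ f := by
  simpa using hσ (1, w) f 1

lemma IsComponentwise.comp_inr_apply_right (hσ : IsComponentwise ι₁ ι₂ σ) (w : W₂) (g : L₂) :
    σ.comp (.inr W₁ W₂) w (ι₂ g) = ι₂ (w.1 g) := by
  simpa using hσ (1, w) 1 g

variable (hσ : IsComponentwise ι₁ ι₂ σ)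

/-- The homomorphism `L₁#W₁ → End_ℂ(L)`, `m_f ∘ w ↦ m_{ι₁ f} ∘ (w, 1)`. -/
def leftSkewHom : skew W₁ →ₐ[ℂ] Module.End ℂ L :=
  skewHom ι₁ (σ.comp (.inl W₁ W₂)) hσ.comp_inl_apply_left

/-- The homomorphism `L₂#W₂ → End_ℂ(L)`, `m_g ∘ w ↦ m_{ι₂ g} ∘ (1, w)`. -/
def rightSkewHom : skew W₂ →ₐ[ℂ] Module.End ℂ L :=
  skewHom ι₂ (σ.comp (.inr W₁ W₂)) hσ.comp_inr_apply_right

lemma leftSkewHom_gen_mul_rightSkewHom_gen (f : L₁) (g : L₂) {w₁ : L₁ ≃ₐ[ℂ] L₁}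
    {w₂ : L₂ ≃ₐ[ℂ] L₂} (h₁ : w₁ ∈ W₁) (h₂ : w₂ ∈ W₂) :
    leftSkewHom hσ ⟨gen f w₁, gen_mem_skew f h₁⟩ * rightSkewHom hσ ⟨gen g w₂, gen_mem_skew g h₂⟩ =
      gen (ι₁ f * ι₂ g) (σ (⟨w₁, h₁⟩, ⟨w₂, h₂⟩)) := by
  rw [leftSkewHom, rightSkewHom, skewHom_gen _ f h₁, skewHom_gen _ g h₂, gen_mul_gen,
    hσ.comp_inl_apply_right, MonoidHom.comp_apply, MonoidHom.comp_apply, ← map_mul,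
    MonoidHom.inl_apply, MonoidHom.inr_apply, Prod.mk_mul_mk, mul_one, one_mul]

lemma rightSkewHom_gen_mul_leftSkewHom_gen (f : L₁) (g : L₂) {w₁ : L₁ ≃ₐ[ℂ] L₁}
    {w₂ : L₂ ≃ₐ[ℂ] L₂} (h₁ : w₁ ∈ W₁) (h₂ : w₂ ∈ W₂) :
    rightSkewHom hσ ⟨gen g w₂, gen_mem_skew g h₂⟩ * leftSkewHom hσ ⟨gen f w₁, gen_mem_skew f h₁⟩ =
      gen (ι₁ f * ι₂ g) (σ (⟨w₁, h₁⟩, ⟨w₂, h₂⟩)) := by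
  rw [leftSkewHom, rightSkewHom, skewHom_gen _ f h₁, skewHom_gen _ g h₂, gen_mul_gen,
    hσ.comp_inr_apply_left, MonoidHom.comp_apply, MonoidHom.comp_apply, ← map_mul,
    MonoidHom.inl_apply, MonoidHom.inr_apply, Prod.mk_mul_mk, mul_one, one_mul, mul_comm]

lemma commute_leftSkewHom_rightSkewHom (X₁ : skew W₁) (X₂ : skew W₂) :
    Commute (leftSkewHom hσ X₁) (rightSkewHom hσ X₂) := by
  induction X₁ using skew_induction with
  | add X Y hX hY => exact map_add (leftSkewHom hσ) X Y ▸ hX.add_left hY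
  | gen f w₁ h₁ =>
    induction X₂ using skew_induction with
    | add X Y hX hY => exact map_add (rightSkewHom hσ) X Y ▸ hX.add_right hY
    | gen g w₂ h₂ =>
      exact (leftSkewHom_gen_mul_rightSkewHom_gen hσ f g h₁ h₂).trans
        (rightSkewHom_gen_mul_leftSkewHom_gen hσ f g h₁ h₂).symm

/-- The homomorphism `ψ : (L₁#W₁) ⊗ (L₂#W₂) → End_ℂ(L)`,
`(m_f ∘ w₁) ⊗ (m_g ∘ w₂) ↦ m_{ι₁ f · ι₂ g} ∘ (w₁, w₂)`. -/
def tensorSkewHom : skew W₁ ⊗[ℂ] skew W₂ →ₐ[ℂ] Module.End ℂ L :=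
  Algebra.TensorProduct.lift (leftSkewHom hσ) (rightSkewHom hσ)
    (commute_leftSkewHom_rightSkewHom hσ)

lemma tensorSkewHom_tmul (X₁ : skew W₁) (X₂ : skew W₂) :
    tensorSkewHom hσ (X₁ ⊗ₜ X₂) = leftSkewHom hσ X₁ * rightSkewHom hσ X₂ :=
  rfl

lemma tensorSkewHom_gen_tmul_gen (f : L₁) (g : L₂) {w₁ : L₁ ≃ₐ[ℂ] L₁}
    {w₂ : L₂ ≃ₐ[ℂ] L₂} (h₁ : w₁ ∈ W₁) (h₂ : w₂ ∈ W₂) :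
    tensorSkewHom hσ (⟨gen f w₁, gen_mem_skew f h₁⟩ ⊗ₜ ⟨gen g w₂, gen_mem_skew g h₂⟩) =
      gen (ι₁ f * ι₂ g) (σ (⟨w₁, h₁⟩, ⟨w₂, h₂⟩)) :=
  leftSkewHom_gen_mul_rightSkewHom_gen hσ f g h₁ h₂

lemma tensorSkewHom_mem_skew (t : skew W₁ ⊗[ℂ] skew W₂) :
    tensorSkewHom hσ t ∈ skew (MonoidHom.mrange σ) := by
  induction t with
  | zero => exact map_zero (tensorSkewHom hσ) ▸ zero_mem _
  | add s t hs ht => exact map_add (tensorSkewHom hσ) s t ▸ add_mem hs ht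
  | tmul X₁ X₂ =>
    have left_mem (w : W₁) : σ.comp (.inl W₁ W₂) w ∈ MonoidHom.mrange σ := ⟨(w, 1), rfl⟩
    have right_mem (w : W₂) : σ.comp (.inr W₁ W₂) w ∈ MonoidHom.mrange σ := ⟨(1, w), rfl⟩
    exact mul_mem (skewHom_mem_skew hσ.comp_inl_apply_left left_mem X₁)
      (skewHom_mem_skew hσ.comp_inr_apply_right right_mem X₂)

lemma tensorSkewHom_tmul_apply_mul (X₁ : skew W₁) (X₂ : skew W₂) (x : L₁) (y : L₂) :
    tensorSkewHom hσ (X₁ ⊗ₜ X₂) (ι₁ x * ι₂ y) = ι₁ (X₁.1 x) * ι₂ (X₂.1 y) := by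
  calc tensorSkewHom hσ (X₁ ⊗ₜ X₂) (ι₁ x * ι₂ y)
      = leftSkewHom hσ X₁ (rightSkewHom hσ X₂ (ι₂ y * ι₁ x)) := by
        rw [tensorSkewHom_tmul, Module.End.mul_apply, mul_comm (ι₁ x)]
    _ = leftSkewHom hσ X₁ (ι₁ x * ι₂ (X₂.1 y)) := by
        rw [rightSkewHom, skewHom_apply_mul_of_fixed _ (hσ.comp_inr_apply_left · x), mul_comm]
    _ = ι₁ (X₁.1 x) * ι₂ (X₂.1 y) :=
        skewHom_apply_mul_of_fixed _ (hσ.comp_inl_apply_right · _) X₁ x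

lemma tensorSkewHom_injective
    (hι : Function.Injective (Algebra.TensorProduct.productMap ι₁ ι₂)) :
    Function.Injective (tensorSkewHom hσ) := by
  let toEnd := TensorProduct.homTensorHomMap (.id ℂ) L₁ L₂ L₁ L₂ ∘ₗ
    TensorProduct.map (skew W₁).val.toLinearMap (skew W₂).val.toLinearMap
  have := Module.Free.of_divisionRing ℂ (skew W₂)
  have : Module.Flat ℂ (skew W₂) := .of_free
  have toEnd_injective : Function.Injective toEnd :=
    (homTensorHomMap_injective ℂ L₁ L₂ L₁ L₂).comp
      (TensorProduct.map_injective_of_flat_flat _ _ Subtype.val_injective Subtype.val_injective)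
  have intertwines (t : skew W₁ ⊗[ℂ] skew W₂) (r : L₁ ⊗[ℂ] L₂) :
      tensorSkewHom hσ t (Algebra.TensorProduct.productMap ι₁ ι₂ r) =
        Algebra.TensorProduct.productMap ι₁ ι₂ (toEnd t r) := by
    induction t with
    | zero => simp only [map_zero, LinearMap.zero_apply]
    | add s t hs ht => simp only [map_add, LinearMap.add_apply, hs, ht]
    | tmul X₁ X₂ =>
      induction r with
      | zero => simp only [map_zero]
      | add r s hr hs => simp only [map_add, hr, hs]
      | tmul x y => exact tensorSkewHom_tmul_apply_mul hσ X₁ X₂ x y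
  refine fun s t hst ↦ toEnd_injective (LinearMap.ext fun r ↦ hι ?_)
  rw [← intertwines, ← intertwines, hst]

lemma tensorSkewHom_tmul_apply_mem_tensorSub {Λ₁ : Subalgebra ℂ L₁} {Λ₂ : Subalgebra ℂ L₂}
    {X₁ : skew W₁} {X₂ : skew W₂} (hX₁ : ∀ x ∈ Λ₁, X₁.1 x ∈ Λ₁) (hX₂ : ∀ y ∈ Λ₂, X₂.1 y ∈ Λ₂)
    {a : L} (ha : a ∈ tensorSub Λ₁ Λ₂ ι₁ ι₂) :
    tensorSkewHom hσ (X₁ ⊗ₜ X₂) a ∈ tensorSub Λ₁ Λ₂ ι₁ ι₂ := by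
  rw [← Subalgebra.mem_toSubmodule, toSubmodule_tensorSub] at ha ⊢
  induction ha using Submodule.mul_induction_on' with
  | add a _ b _ ha hb => exact map_add (tensorSkewHom hσ (X₁ ⊗ₜ X₂)) a b ▸ add_mem ha hb
  | mem_mul_mem _ hx _ hy =>
    obtain ⟨x, hx, rfl⟩ := hx
    obtain ⟨y, hy, rfl⟩ := hy
    exact tensorSkewHom_tmul_apply_mul hσ X₁ X₂ x y ▸
      Submodule.mul_mem_mul ⟨_, hX₁ x hx, rfl⟩ ⟨_, hX₂ y hy, rfl⟩

end TensorProduct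

theorem tensor_embedding_of_standard_flag_orders_general
    {L₁ L₂ L : Type*} [Field L₁] [Algebra ℂ L₁] [Field L₂] [Algebra ℂ L₂]
    [Field L] [Algebra ℂ L]
    (Λ₁ : Subalgebra ℂ L₁) (Λ₂ : Subalgebra ℂ L₂)
    (W₁ : Submonoid (L₁ ≃ₐ[ℂ] L₁)) (W₂ : Submonoid (L₂ ≃ₐ[ℂ] L₂))
    (ι₁ : L₁ →ₐ[ℂ] L) (ι₂ : L₂ →ₐ[ℂ] L)
    (hι : Function.Injective (Algebra.TensorProduct.productMap ι₁ ι₂))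
    (σ : W₁ × W₂ →* (L ≃ₐ[ℂ] L))
    (hσ : IsComponentwise ι₁ ι₂ σ) :
    ∃ ψ : skew W₁ ⊗[ℂ] skew W₂ →ₐ[ℂ] Module.End ℂ L,
      (∀ (f : L₁) (g : L₂) (w₁ : L₁ ≃ₐ[ℂ] L₁) (w₂ : L₂ ≃ₐ[ℂ] L₂) (h₁ : w₁ ∈ W₁) (h₂ : w₂ ∈ W₂),
        ψ (⟨gen f w₁, gen_mem_skew f h₁⟩ ⊗ₜ[ℂ] ⟨gen g w₂, gen_mem_skew g h₂⟩)
          = gen (ι₁ f * ι₂ g) (σ (⟨w₁, h₁⟩, ⟨w₂, h₂⟩))) ∧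
      Function.Injective ψ ∧
      (∀ t, ψ t ∈ skew (MonoidHom.mrange σ)) ∧
      (∀ (X₁ : skew W₁) (X₂ : skew W₂),
        (X₁ : Module.End ℂ L₁) ∈ flag Λ₁ W₁ → (X₂ : Module.End ℂ L₂) ∈ flag Λ₂ W₂ →
        ∀ a ∈ tensorSub Λ₁ Λ₂ ι₁ ι₂, ψ (X₁ ⊗ₜ[ℂ] X₂) a ∈ tensorSub Λ₁ Λ₂ ι₁ ι₂) :=
  ⟨tensorSkewHom hσ, fun f g _ _ ↦ tensorSkewHom_gen_tmul_gen hσ f g,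
    tensorSkewHom_injective hσ hι, tensorSkewHom_mem_skew hσ,
    fun _ _ hX₁ hX₂ _ ↦ tensorSkewHom_tmul_apply_mem_tensorSub hσ hX₁.2 hX₂.2⟩

theorem tensor_embedding_of_standard_flag_orders
    {L₁ L₂ L : Type*} [Field L₁] [Algebra ℂ L₁] [Field L₂] [Algebra ℂ L₂]
    [Field L] [Algebra ℂ L]
    (Λ₁ : Subalgebra ℂ L₁) (Λ₂ : Subalgebra ℂ L₂)
    [IsFractionRing Λ₁ L₁] [IsFractionRing Λ₂ L₂]
    (W₁ : Subgroup (L₁ ≃ₐ[ℂ] L₁)) (W₂ : Subgroup (L₂ ≃ₐ[ℂ] L₂))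
    (hW₁ : ∀ w ∈ W₁, ∀ x : L₁, x ∈ Λ₁ ↔ w x ∈ Λ₁)
    (hW₂ : ∀ w ∈ W₂, ∀ x : L₂, x ∈ Λ₂ ↔ w x ∈ Λ₂)
    (ι₁ : L₁ →ₐ[ℂ] L) (ι₂ : L₂ →ₐ[ℂ] L)
    -- ι : L₁ ⊗ L₂ → L is injective (equivalently Λ₁ ⊗ Λ₂ is a domain with Frac = L)
    (hι : Function.Injective (Algebra.TensorProduct.productMap ι₁ ι₂))
    -- L is the fraction field of Λ = ι(Λ₁ ⊗ Λ₂)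
    (hfrac : ∀ x : L, ∃ a ∈ tensorSub Λ₁ Λ₂ ι₁ ι₂, ∃ b ∈ tensorSub Λ₁ Λ₂ ι₁ ι₂,
      b ≠ 0 ∧ x = a / b)
    -- the componentwise action of Ŵ₁ × Ŵ₂ on L
    (ext : ((L₁ ≃ₐ[ℂ] L₁) × (L₂ ≃ₐ[ℂ] L₂)) →* (L ≃ₐ[ℂ] L))
    (hext : ∀ (p : (L₁ ≃ₐ[ℂ] L₁) × (L₂ ≃ₐ[ℂ] L₂)) (f : L₁) (g : L₂),
      ext p (ι₁ f * ι₂ g) = ι₁ (p.1 f) * ι₂ (p.2 g)) :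
    ∃ ψ : (↥(skew W₁.toSubmonoid) ⊗[ℂ] ↥(skew W₂.toSubmonoid)) →ₐ[ℂ] Module.End ℂ L,
      -- ψ is determined by ψ((m_f∘w₁) ⊗ (m_g∘w₂)) = m_{ι(f⊗g)} ∘ (w₁,w₂)
      (∀ (f : L₁) (g : L₂) (w₁ : L₁ ≃ₐ[ℂ] L₁) (w₂ : L₂ ≃ₐ[ℂ] L₂)
          (h₁ : w₁ ∈ W₁) (h₂ : w₂ ∈ W₂),
        ψ (⟨gen f w₁, gen_mem_skew f h₁⟩ ⊗ₜ[ℂ] ⟨gen g w₂, gen_mem_skew g h₂⟩)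
          = gen (ι₁ f * ι₂ g) (ext (w₁, w₂))) ∧
      -- ψ is injective
      Function.Injective ψ ∧
      -- ψ takes values in L#(Ŵ₁ × Ŵ₂)
      (∀ t, ψ t ∈ skew (Submonoid.map ext (W₁.toSubmonoid.prod W₂.toSubmonoid))) ∧
      -- ψ maps 𝓕_{Λ₁} ⊗ 𝓕_{Λ₂} into 𝓕_Λ
      (∀ (X₁ : skew W₁.toSubmonoid) (X₂ : skew W₂.toSubmonoid),
        (X₁ : Module.End ℂ L₁) ∈ flag Λ₁ W₁.toSubmonoid →
        (X₂ : Module.End ℂ L₂) ∈ flag Λ₂ W₂.toSubmonoid →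
        ∀ a ∈ tensorSub Λ₁ Λ₂ ι₁ ι₂, ψ (X₁ ⊗ₜ[ℂ] X₂) a ∈ tensorSub Λ₁ Λ₂ ι₁ ι₂) := by
  have := tensor_embedding_of_standard_flag_orders_general Λ₁ Λ₂ W₁.toSubmonoid W₂.toSubmonoid
    ι₁ ι₂ hι (ext.comp (W₁.toSubmonoid.subtype.prodMap W₂.toSubmonoid.subtype)) fun _ ↦ hext _
  rwa [← MonoidHom.map_mrange, MonoidHom.mrange_prodMap, Submonoid.mrange_subtype,
    Submonoid.mrange_subtype] at this
end
end

section
/- For i = 1,2 let Λᵢ be an integral domain and commutative ℂ-algebra with Lᵢ = Frac(Λᵢ), and Ŵᵢ a group of ℂ-algebra automorphisms of Λᵢ. Assume Λ = Λ₁ ⊗_ℂ Λ₂ is an integral domain with L = Frac(Λ), Ŵ = Ŵ₁ × Ŵ₂ acting componentwise, and ι: L₁ ⊗_ℂ L₂ → L the canonical injection. If X = Σ_{i=1}^k m_{f_i}∘(w_{i1}, w_{i2}) ∈ L#Ŵ lies in the standard flag order 𝓕_Λ, then there exist nonzero d₁ ∈ Λ₁ and d₂ ∈ Λ₂ such that every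 coefficient f_i lies in ι((1/d₁)Λ₁ ⊗_ℂ (1/d₂)Λ₂); in particular every element of 𝓕_Λ lies in the image of the embedding ψ: (L₁#Ŵ₁) ⊗_ℂ (L₂#Ŵ₂) → L#Ŵ, so 𝓕_Λ ⊆ ψ({Y ∈ (L₁#Ŵ₁) ⊗_ℂ (L₂#Ŵ₂) : ψ(Y)(Λ) ⊆ Λ}). -/
/-!
Statement 11: In the tensor-product setting, if X = Σᵢ m_{fᵢ} ∘ (w_{i1}, w_{i2}) ∈ L#Ŵ lies
in the standard flag order 𝓕_Λ (Λ = Λ₁ ⊗_ℂ Λ₂ realized inside L = Frac(Λ)), then there are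
nonzero d₁ ∈ Λ₁, d₂ ∈ Λ₂ with every fᵢ ∈ ι((1/d₁)Λ₁ ⊗ (1/d₂)Λ₂), i.e.
ι₁(d₁)·ι₂(d₂)·fᵢ ∈ Λ; in particular X lies in the image of the canonical embedding
ψ : (L₁#Ŵ₁) ⊗_ℂ (L₂#Ŵ₂) → L#Ŵ.
-/

set_option synthInstance.maxHeartbeats 1000000
set_option maxHeartbeats 1000000

open scoped TensorProduct

noncomputable section

/-!
Let `X = ∑ fᵢ σᵢ` preserve `Λ`. For `x ∈ Λ` with `σⱼ x ∈ Λ`, the operator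
`a ↦ X (x a) - σⱼ x * X a` again preserves `Λ`, and its coefficients are `(σᵢ x - σⱼ x) fᵢ`, so the
`j`-th one vanishes. Removing in this way all `j ≠ i₀` and evaluating at `1` gives
`∏ⱼ (σ_{i₀} xⱼ - σⱼ xⱼ) * f_{i₀} ∈ Λ`. In `Λ = Λ₁ ⊗ Λ₂` two distinct automorphisms `(u₁, u₂)` and
`(v₁, v₂)` already differ on `Λ₁` or on `Λ₂`, so each `xⱼ` can be chosen in one of the two tensor
factors, and the resulting denominator is a pure tensor.
-/

lemma exists_common_multiplier {M S ι : Type*} [CommMonoid M] [SetLike S M] [SubmonoidClass S M]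
    [Finite ι] {A : S} {D : Submonoid M} (hDA : ∀ d ∈ D, d ∈ A) {f : ι → M}
    (h : ∀ i, ∃ d ∈ D, d * f i ∈ A) : ∃ d ∈ D, ∀ i, d * f i ∈ A := by
  classical
  cases nonempty_fintype ι
  choose d hd hdf using h
  refine ⟨∏ i, d i, prod_mem fun i _ => hd i, fun i => ?_⟩
  rw [← Finset.prod_erase_mul _ d (Finset.mem_univ i), mul_assoc]
  exact mul_mem (prod_mem fun j _ => hDA _ (hd j)) (hdf i)

section IsFlag

variable {R S ι : Type*} [CommRing R] [SetLike S R] [Fintype ι]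

/-- The family `f` of coefficients defines an element `∑ i, f i • σ i` of the standard flag order
of `A`, i.e. this operator maps `A` into itself. It is encoded by its coefficients `f` together with
multiplicative maps `σ i` of the ambient ring. -/
def IsFlag (A : S) (σ : ι → R →* R) (f : ι → R) : Prop :=
  ∀ a ∈ A, ∑ i, f i * σ i a ∈ A

variable [SubringClass S R] {A : S} {σ : ι → R →* R} {f : ι → R}

lemma IsFlag.apply_sub_mul (hf : IsFlag A σ f) {x y : R} (hx : x ∈ A) (hy : y ∈ A) :
    IsFlag A σ fun i => (σ i x - y) * f i := by
  intro a ha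
  have hcomm : ∑ i, (σ i x - y) * f i * σ i a
      = ∑ i, f i * σ i (x * a) - y * ∑ i, f i * σ i a := by
    rw [Finset.mul_sum, ← Finset.sum_sub_distrib]
    refine Finset.sum_congr rfl fun i _ => ?_
    rw [map_mul]
    ring
  rw [hcomm]
  exact sub_mem (hf _ (mul_mem hx ha)) (mul_mem hy (hf a ha))

lemma IsFlag.prod_apply_sub_mul (hf : IsFlag A σ f) (s : Finset ι) {x y : ι → R}
    (hx : ∀ j ∈ s, x j ∈ A) (hy : ∀ j ∈ s, y j ∈ A) :
    IsFlag A σ fun i => (∏ j ∈ s, (σ i (x j) - y j)) * f i := by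
  classical
  induction s using Finset.induction_on with
  | empty => simpa using hf
  | insert j s hj ih =>
    rw [Finset.forall_mem_insert] at hx hy
    simpa only [Finset.prod_insert hj, mul_assoc] using
      (ih hx.2 hy.2).apply_sub_mul hx.1 hy.1

lemma IsFlag.prod_erase_mul_mem [DecidableEq ι] (hf : IsFlag A σ f) (i₀ : ι) {x : ι → R}
    (hx : ∀ j ≠ i₀, x j ∈ A) (hσx : ∀ j ≠ i₀, σ j (x j) ∈ A) :
    (∏ j ∈ Finset.univ.erase i₀, (σ i₀ (x j) - σ j (x j))) * f i₀ ∈ A := by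
  have hsum : ∑ i, (∏ j ∈ Finset.univ.erase i₀, (σ i (x j) - σ j (x j))) * f i * σ i 1 ∈ A :=
    hf.prod_apply_sub_mul (Finset.univ.erase i₀)
      (fun j hj => hx j (Finset.ne_of_mem_erase hj))
      (fun j hj => hσx j (Finset.ne_of_mem_erase hj)) 1 (one_mem A)
  have hvanish : ∀ i ≠ i₀, ∏ j ∈ Finset.univ.erase i₀, (σ i (x j) - σ j (x j)) = 0 := fun i hi =>
    Finset.prod_eq_zero (Finset.mem_erase.2 ⟨hi, Finset.mem_univ i⟩) (sub_self _)
  rwa [Fintype.sum_eq_single i₀ fun i hi => by rw [hvanish i hi, zero_mul, zero_mul],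
    map_one, mul_one] at hsum

lemma IsFlag.exists_common_denominator (hf : IsFlag A σ f) {D : Submonoid R}
    (hDA : ∀ d ∈ D, d ∈ A) (hsep : Pairwise fun i j => ∃ x ∈ A, σ j x ∈ A ∧ σ i x - σ j x ∈ D) :
    ∃ d ∈ D, ∀ i, d * f i ∈ A := by
  classical
  refine exists_common_multiplier hDA fun i₀ => ?_
  choose! x hxA hσx hxD using fun j (hj : j ≠ i₀) => hsep hj.symm
  exact ⟨_, prod_mem fun j hj => hxD j (Finset.ne_of_mem_erase hj),
    hf.prod_erase_mul_mem i₀ hxA hσx⟩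

end IsFlag

lemma exists_mem_apply_ne_of_isFractionRing {k K E F : Type*} [CommRing k] [CommRing K]
    [Algebra k K] [CommSemiring E] [FunLike F K E] [RingHomClass F K E] (A : Subalgebra k K)
    [IsFractionRing A K] {u v : F} (huv : u ≠ v) : ∃ x ∈ A, u x ≠ v x := by
  by_contra! h
  have hringHom : (u : K →+* E) = v :=
    IsLocalization.ringHom_ext (nonZeroDivisors A) (RingHom.ext fun a => h a a.2)
  exact huv (DFunLike.ext u v (RingHom.congr_fun hringHom))

section TensorSub

variable {L₁ L₂ L : Type*} [Field L₁] [Algebra ℂ L₁] [Field L₂] [Algebra ℂ L₂]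
  [Field L] [Algebra ℂ L] {Λ₁ : Subalgebra ℂ L₁} {Λ₂ : Subalgebra ℂ L₂}
  {ι₁ : L₁ →ₐ[ℂ] L} {ι₂ : L₂ →ₐ[ℂ] L}

lemma map_left_mem_tensorSub {x : L₁} (hx : x ∈ Λ₁) : ι₁ x ∈ tensorSub Λ₁ Λ₂ ι₁ ι₂ :=
  Algebra.subset_adjoin (Or.inl ⟨x, hx, rfl⟩)

lemma map_right_mem_tensorSub {x : L₂} (hx : x ∈ Λ₂) : ι₂ x ∈ tensorSub Λ₁ Λ₂ ι₁ ι₂ :=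
  Algebra.subset_adjoin (Or.inr ⟨x, hx, rfl⟩)

lemma tensorSub_le_range_productMap :
    tensorSub Λ₁ Λ₂ ι₁ ι₂ ≤ (Algebra.TensorProduct.productMap ι₁ ι₂).range := by
  refine Algebra.adjoin_le ?_
  rintro _ (⟨x, -, rfl⟩ | ⟨x, -, rfl⟩)
  · exact ⟨x ⊗ₜ 1, by simp⟩
  · exact ⟨1 ⊗ₜ x, by simp⟩

variable (Λ₁ Λ₂ ι₁ ι₂) in
/-- The nonzero pure tensors `d₁ ⊗ d₂` of `Λ₁ ⊗ Λ₂`, as a multiplicative set in `L`: these are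
the denominators of the elements of `(1/d₁)Λ₁ ⊗ (1/d₂)Λ₂`. -/
def pureDenominators : Submonoid L :=
  (Λ₁.toSubmonoid ⊓ nonZeroDivisors L₁).map ι₁ ⊔ (Λ₂.toSubmonoid ⊓ nonZeroDivisors L₂).map ι₂

lemma mem_pureDenominators {d : L} :
    d ∈ pureDenominators Λ₁ Λ₂ ι₁ ι₂ ↔
      ∃ d₁ ∈ Λ₁, d₁ ≠ 0 ∧ ∃ d₂ ∈ Λ₂, d₂ ≠ 0 ∧ ι₁ d₁ * ι₂ d₂ = d := by
  simp [pureDenominators, Submonoid.mem_sup, and_assoc]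

lemma map_left_mem_pureDenominators {x : L₁} (hx : x ∈ Λ₁) (hx0 : x ≠ 0) :
    ι₁ x ∈ pureDenominators Λ₁ Λ₂ ι₁ ι₂ :=
  mem_pureDenominators.2 ⟨x, hx, hx0, 1, one_mem _, one_ne_zero, by simp⟩

lemma map_right_mem_pureDenominators {x : L₂} (hx : x ∈ Λ₂) (hx0 : x ≠ 0) :
    ι₂ x ∈ pureDenominators Λ₁ Λ₂ ι₁ ι₂ :=
  mem_pureDenominators.2 ⟨1, one_mem _, one_ne_zero, x, hx, hx0, by simp⟩

lemma mem_tensorSub_of_mem_pureDenominators {d : L} (hd : d ∈ pureDenominators Λ₁ Λ₂ ι₁ ι₂) :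
    d ∈ tensorSub Λ₁ Λ₂ ι₁ ι₂ := by
  obtain ⟨d₁, hd₁, -, d₂, hd₂, -, rfl⟩ := mem_pureDenominators.1 hd
  exact mul_mem (map_left_mem_tensorSub hd₁) (map_right_mem_tensorSub hd₂)

lemma inv_mem_range_productMap {d : L} (hd : d ∈ pureDenominators Λ₁ Λ₂ ι₁ ι₂) :
    d⁻¹ ∈ (Algebra.TensorProduct.productMap ι₁ ι₂).range := by
  obtain ⟨d₁, -, -, d₂, -, -, rfl⟩ := mem_pureDenominators.1 hd
  exact ⟨d₁⁻¹ ⊗ₜ d₂⁻¹, by simp [mul_comm]⟩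

lemma ne_zero_of_mem_pureDenominators {d : L} (hd : d ∈ pureDenominators Λ₁ Λ₂ ι₁ ι₂) :
    d ≠ 0 := by
  obtain ⟨d₁, -, hd₁, d₂, -, hd₂, rfl⟩ := mem_pureDenominators.1 hd
  exact mul_ne_zero ((map_ne_zero ι₁).2 hd₁) ((map_ne_zero ι₂).2 hd₂)

lemma mem_range_productMap_of_mul_mem {d g : L} (hd : d ∈ pureDenominators Λ₁ Λ₂ ι₁ ι₂)
    (hdg : d * g ∈ tensorSub Λ₁ Λ₂ ι₁ ι₂) :
    g ∈ (Algebra.TensorProduct.productMap ι₁ ι₂).range := by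
  rw [← inv_mul_cancel_left₀ (ne_zero_of_mem_pureDenominators hd) g]
  exact mul_mem (inv_mem_range_productMap hd) (tensorSub_le_range_productMap hdg)

lemma exists_apply_sub_mem_pureDenominators [IsFractionRing Λ₁ L₁] [IsFractionRing Λ₂ L₂]
    {p q : (L₁ ≃ₐ[ℂ] L₁) × (L₂ ≃ₐ[ℂ] L₂)} (hpq : p ≠ q)
    (hp₁ : ∀ x ∈ Λ₁, p.1 x ∈ Λ₁) (hp₂ : ∀ x ∈ Λ₂, p.2 x ∈ Λ₂)
    (hq₁ : ∀ x ∈ Λ₁, q.1 x ∈ Λ₁) (hq₂ : ∀ x ∈ Λ₂, q.2 x ∈ Λ₂) {σ τ : L → L}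
    (hσ₁ : ∀ x, σ (ι₁ x) = ι₁ (p.1 x)) (hσ₂ : ∀ x, σ (ι₂ x) = ι₂ (p.2 x))
    (hτ₁ : ∀ x, τ (ι₁ x) = ι₁ (q.1 x)) (hτ₂ : ∀ x, τ (ι₂ x) = ι₂ (q.2 x)) :
    ∃ x ∈ tensorSub Λ₁ Λ₂ ι₁ ι₂, τ x ∈ tensorSub Λ₁ Λ₂ ι₁ ι₂ ∧
      σ x - τ x ∈ pureDenominators Λ₁ Λ₂ ι₁ ι₂ := by
  by_cases h₁ : p.1 = q.1
  · have h₂ : p.2 ≠ q.2 := fun h₂ => hpq (Prod.ext h₁ h₂)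
    obtain ⟨x, hx, hne⟩ := exists_mem_apply_ne_of_isFractionRing Λ₂ h₂
    refine ⟨ι₂ x, map_right_mem_tensorSub hx, ?_, ?_⟩
    · exact hτ₂ x ▸ map_right_mem_tensorSub (hq₂ x hx)
    · rw [hσ₂, hτ₂, ← map_sub]
      exact map_right_mem_pureDenominators (sub_mem (hp₂ x hx) (hq₂ x hx)) (sub_ne_zero.2 hne)
  · obtain ⟨x, hx, hne⟩ := exists_mem_apply_ne_of_isFractionRing Λ₁ h₁
    refine ⟨ι₁ x, map_left_mem_tensorSub hx, ?_, ?_⟩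
    · exact hτ₁ x ▸ map_left_mem_tensorSub (hq₁ x hx)
    · rw [hσ₁, hτ₁, ← map_sub]
      exact map_left_mem_pureDenominators (sub_mem (hp₁ x hx) (hq₁ x hx)) (sub_ne_zero.2 hne)

lemma gen_zero_left (σ : L ≃ₐ[ℂ] L) : gen 0 σ = 0 := by
  ext
  simp [gen]

lemma gen_add_left (f g : L) (σ : L ≃ₐ[ℂ] L) : gen (f + g) σ = gen f σ + gen g σ := by
  ext
  simp [gen, add_mul]

lemma gen_mem_of_mem_range_productMap {S : Type*} [SetLike S (Module.End ℂ L)]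
    [AddSubmonoidClass S (Module.End ℂ L)] {P : S} {σ : L ≃ₐ[ℂ] L}
    (hP : ∀ a b, gen (ι₁ a * ι₂ b) σ ∈ P) {g : L}
    (hg : g ∈ (Algebra.TensorProduct.productMap ι₁ ι₂).range) : gen g σ ∈ P := by
  obtain ⟨t, rfl⟩ := hg
  induction t using TensorProduct.induction_on with
  | zero => simp [gen_zero_left]
  | tmul a b => simpa using hP a b
  | add s t hs ht =>
    rw [map_add, gen_add_left]
    exact add_mem hs ht

end TensorSub

theorem flag_elements_have_bounded_denominators_general
    {L₁ L₂ L : Type*} [Field L₁] [Algebra ℂ L₁] [Field L₂] [Algebra ℂ L₂]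
    [Field L] [Algebra ℂ L]
    (Λ₁ : Subalgebra ℂ L₁) (Λ₂ : Subalgebra ℂ L₂)
    [IsFractionRing Λ₁ L₁] [IsFractionRing Λ₂ L₂]
    (W₁ : Submonoid (L₁ ≃ₐ[ℂ] L₁)) (W₂ : Submonoid (L₂ ≃ₐ[ℂ] L₂))
    (hW₁ : ∀ w ∈ W₁, ∀ x ∈ Λ₁, w x ∈ Λ₁) (hW₂ : ∀ w ∈ W₂, ∀ x ∈ Λ₂, w x ∈ Λ₂)
    (ι₁ : L₁ →ₐ[ℂ] L) (ι₂ : L₂ →ₐ[ℂ] L)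
    (ext : (L₁ ≃ₐ[ℂ] L₁) × (L₂ ≃ₐ[ℂ] L₂) → (L ≃ₐ[ℂ] L))
    (hext : ∀ (p : (L₁ ≃ₐ[ℂ] L₁) × (L₂ ≃ₐ[ℂ] L₂)) (f : L₁) (g : L₂),
      ext p (ι₁ f * ι₂ g) = ι₁ (p.1 f) * ι₂ (p.2 g))
    {ι : Type*} [Fintype ι] (f : ι → L) (w : ι → (L₁ ≃ₐ[ℂ] L₁) × (L₂ ≃ₐ[ℂ] L₂))
    (hwmem : ∀ i, (w i).1 ∈ W₁ ∧ (w i).2 ∈ W₂) (hwinj : Function.Injective w)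
    (hXflag : ∀ a ∈ tensorSub Λ₁ Λ₂ ι₁ ι₂,
      (∑ i, gen (f i) (ext (w i))) a ∈ tensorSub Λ₁ Λ₂ ι₁ ι₂) :
    (∃ d₁ ∈ Λ₁, d₁ ≠ 0 ∧ ∃ d₂ ∈ Λ₂, d₂ ≠ 0 ∧
      ∀ i, ι₁ d₁ * ι₂ d₂ * f i ∈ tensorSub Λ₁ Λ₂ ι₁ ι₂) ∧
    (∀ ψ : (↥(skew W₁) ⊗[ℂ] ↥(skew W₂)) →ₗ[ℂ] Module.End ℂ L,
      (∀ (a : L₁) (b : L₂) (w₁ : L₁ ≃ₐ[ℂ] L₁) (w₂ : L₂ ≃ₐ[ℂ] L₂)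
          (h₁ : w₁ ∈ W₁) (h₂ : w₂ ∈ W₂),
        ψ (⟨gen a w₁, gen_mem_skew a h₁⟩ ⊗ₜ[ℂ] ⟨gen b w₂, gen_mem_skew b h₂⟩)
          = gen (ι₁ a * ι₂ b) (ext (w₁, w₂))) →
      ∃ t, ψ t = ∑ i, gen (f i) (ext (w i))) := by
  have hext₁ : ∀ p x, ext p (ι₁ x) = ι₁ (p.1 x) := fun p x => by simpa using hext p x 1
  have hext₂ : ∀ p x, ext p (ι₂ x) = ι₂ (p.2 x) := fun p x => by simpa using hext p 1 x
  have hf : IsFlag (tensorSub Λ₁ Λ₂ ι₁ ι₂) (fun i => (ext (w i) : L →* L)) f := fun a ha => by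
    simpa [gen, LinearMap.sum_apply] using hXflag a ha
  obtain ⟨d, hd, hdf⟩ := hf.exists_common_denominator
    (fun _ => mem_tensorSub_of_mem_pureDenominators) fun i j hij =>
      exists_apply_sub_mem_pureDenominators (hwinj.ne hij)
        (hW₁ _ (hwmem i).1) (hW₂ _ (hwmem i).2) (hW₁ _ (hwmem j).1) (hW₂ _ (hwmem j).2)
        (hext₁ (w i)) (hext₂ (w i)) (hext₁ (w j)) (hext₂ (w j))
  constructor
  · obtain ⟨d₁, hd₁, hd₁0, d₂, hd₂, hd₂0, rfl⟩ := mem_pureDenominators.1 hd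
    exact ⟨d₁, hd₁, hd₁0, d₂, hd₂, hd₂0, hdf⟩
  · intro ψ hψ
    have hpure : ∀ i a b, gen (ι₁ a * ι₂ b) (ext (w i)) ∈ ψ.range := fun i a b =>
      ⟨_, hψ a b (w i).1 (w i).2 (hwmem i).1 (hwmem i).2⟩
    have hsum : ∑ i, gen (f i) (ext (w i)) ∈ ψ.range := sum_mem fun i _ =>
      gen_mem_of_mem_range_productMap (hpure i) (mem_range_productMap_of_mul_mem hd (hdf i))
    exact hsum

theorem flag_elements_have_bounded_denominators
    {L₁ L₂ L : Type*} [Field L₁] [Algebra ℂ L₁] [Field L₂] [Algebra ℂ L₂]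
    [Field L] [Algebra ℂ L]
    (Λ₁ : Subalgebra ℂ L₁) (Λ₂ : Subalgebra ℂ L₂)
    [IsFractionRing Λ₁ L₁] [IsFractionRing Λ₂ L₂]
    (W₁ : Subgroup (L₁ ≃ₐ[ℂ] L₁)) (W₂ : Subgroup (L₂ ≃ₐ[ℂ] L₂))
    (hW₁ : ∀ w ∈ W₁, ∀ x : L₁, x ∈ Λ₁ ↔ w x ∈ Λ₁)
    (hW₂ : ∀ w ∈ W₂, ∀ x : L₂, x ∈ Λ₂ ↔ w x ∈ Λ₂)
    (ι₁ : L₁ →ₐ[ℂ] L) (ι₂ : L₂ →ₐ[ℂ] L)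
    (hι : Function.Injective (Algebra.TensorProduct.productMap ι₁ ι₂))
    (hfrac : ∀ x : L, ∃ a ∈ tensorSub Λ₁ Λ₂ ι₁ ι₂, ∃ b ∈ tensorSub Λ₁ Λ₂ ι₁ ι₂,
      b ≠ 0 ∧ x = a / b)
    (ext : ((L₁ ≃ₐ[ℂ] L₁) × (L₂ ≃ₐ[ℂ] L₂)) →* (L ≃ₐ[ℂ] L))
    (hext : ∀ (p : (L₁ ≃ₐ[ℂ] L₁) × (L₂ ≃ₐ[ℂ] L₂)) (f : L₁) (g : L₂),
      ext p (ι₁ f * ι₂ g) = ι₁ (p.1 f) * ι₂ (p.2 g))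
    -- X = Σᵢ m_{fᵢ} ∘ (w_{i1}, w_{i2}), with distinct (w_{i1}, w_{i2}) ∈ Ŵ₁ × Ŵ₂
    (k : ℕ) (f : Fin k → L) (w : Fin k → (L₁ ≃ₐ[ℂ] L₁) × (L₂ ≃ₐ[ℂ] L₂))
    (hwmem : ∀ i, (w i).1 ∈ W₁ ∧ (w i).2 ∈ W₂)
    (hwinj : Function.Injective w)
    -- X lies in the standard flag order 𝓕_Λ
    (hXflag : ∀ a ∈ tensorSub Λ₁ Λ₂ ι₁ ι₂,
      (∑ i, gen (f i) (ext (w i))) a ∈ tensorSub Λ₁ Λ₂ ι₁ ι₂) :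
    -- the coefficients have bounded denominators:
    (∃ d₁ ∈ Λ₁, d₁ ≠ 0 ∧ ∃ d₂ ∈ Λ₂, d₂ ≠ 0 ∧
      ∀ i, ι₁ d₁ * ι₂ d₂ * f i ∈ tensorSub Λ₁ Λ₂ ι₁ ι₂) ∧
    -- in particular, X lies in the image of any embedding ψ determined by the canonical formula
    (∀ ψ : (↥(skew W₁.toSubmonoid) ⊗[ℂ] ↥(skew W₂.toSubmonoid)) →ₐ[ℂ] Module.End ℂ L,
      (∀ (a : L₁) (b : L₂) (w₁ : L₁ ≃ₐ[ℂ] L₁) (w₂ : L₂ ≃ₐ[ℂ] L₂)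
          (h₁ : w₁ ∈ W₁) (h₂ : w₂ ∈ W₂),
        ψ (⟨gen a w₁, gen_mem_skew a h₁⟩ ⊗ₜ[ℂ] ⟨gen b w₂, gen_mem_skew b h₂⟩)
          = gen (ι₁ a * ι₂ b) (ext (w₁, w₂))) →
      ∃ t, ψ t = ∑ i, gen (f i) (ext (w i))) := by
  have h := flag_elements_have_bounded_denominators_general Λ₁ Λ₂ W₁.toSubmonoid W₂.toSubmonoid
    (fun w hw x => (hW₁ w hw x).1) (fun w hw x => (hW₂ w hw x).1) ι₁ ι₂ ext hext f w hwmem hwinj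
    hXflag
  exact ⟨h.1, fun ψ => h.2 ψ.toLinearMap⟩
end
end

section
/- For i = 1,2 let (Λᵢ, Wᵢ, 𝓜ᵢ) be flag order data: Λᵢ a Noetherian integral domain and commutative ℂ-algebra, Wᵢ a finite group of ℂ-algebra automorphisms of Λᵢ, 𝓜ᵢ a submonoid of automorphisms of Λᵢ with wμw⁻¹ ∈ 𝓜ᵢ for all w ∈ Wᵢ, μ ∈ 𝓜ᵢ, and Ŵᵢ the submonoid of Aut(Λᵢ) consisting of the products w·μ (w ∈ Wᵢ, μ ∈ 𝓜ᵢ). Let Fᵢ ⊆ Lᵢ#Ŵᵢ be a principal flag order with data (Λᵢ, Wᵢ, 𝓜ᵢ). Assume Λ = Λ₁ ⊗_ℂ Λ₂ is an integral domain, and let ψ: (L₁#Ŵ₁) ⊗_ℂ (L₂#Ŵ₂) → L#Ŵ be the canonical embedding, where Ŵ = Ŵ₁ × Ŵ₂ acts componentwise. Then ψ(F₁ ⊗_ℂ F₂) is a principal flag order with data (Λ₁⊗_ℂΛ₂, W₁×W₂, 𝓜₁×𝓜₂): it contains Λ#(W₁×W₂), its left L-span equals L#Ŵ, and every element X of it satisfies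 X(Λ) ⊆ Λ. -/
/-!
Statement 13: Given two sets of flag order data (Λᵢ, Wᵢ, 𝓜ᵢ) (Λᵢ Noetherian domains,
Wᵢ finite groups of automorphisms, 𝓜ᵢ Wᵢ-invariant submonoids of automorphisms,
Ŵᵢ = ⟨Wᵢ, 𝓜ᵢ⟩) and principal flag orders Fᵢ ⊆ Lᵢ#Ŵᵢ, the image ψ(F₁ ⊗_ℂ F₂) under the
canonical embedding ψ is a principal flag order with data (Λ₁⊗_ℂΛ₂, W₁×W₂, 𝓜₁×𝓜₂):
it is a subalgebra containing Λ#(W₁×W₂), its left L-span is L#Ŵ, and each of its elements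
preserves Λ = Λ₁⊗Λ₂.
-/

set_option synthInstance.maxHeartbeats 1000000
set_option maxHeartbeats 4000000

open scoped TensorProduct

noncomputable section

/-- The submonoid `Ŵ = ⟨W, 𝓜⟩` generated by `W` and `𝓜`. -/
def genMon {L₀ : Type*} [Field L₀] [Algebra ℂ L₀] (W : Subgroup (L₀ ≃ₐ[ℂ] L₀))
    (M : Submonoid (L₀ ≃ₐ[ℂ] L₀)) : Submonoid (L₀ ≃ₐ[ℂ] L₀) :=
  Submonoid.closure ((W : Set (L₀ ≃ₐ[ℂ] L₀)) ∪ (M : Set (L₀ ≃ₐ[ℂ] L₀)))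

/-- The span of pure tensors `X₁ ⊗ X₂` with `Xᵢ ∈ Fᵢ`, inside `(L₁#Ŵ₁) ⊗ (L₂#Ŵ₂)`;
this realizes `F₁ ⊗_ℂ F₂`. -/
def pureSpan {L₁ L₂ : Type*} [Field L₁] [Algebra ℂ L₁] [Field L₂] [Algebra ℂ L₂]
    (W₁' : Submonoid (L₁ ≃ₐ[ℂ] L₁)) (W₂' : Submonoid (L₂ ≃ₐ[ℂ] L₂))
    (F₁ : Set (Module.End ℂ L₁)) (F₂ : Set (Module.End ℂ L₂)) :
    Submodule ℂ (↥(skew W₁') ⊗[ℂ] ↥(skew W₂')) :=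
  Submodule.span ℂ {t | ∃ (X₁ : skew W₁') (X₂ : skew W₂'),
    ((X₁ : Module.End ℂ L₁) ∈ F₁) ∧ ((X₂ : Module.End ℂ L₂) ∈ F₂) ∧ t = X₁ ⊗ₜ[ℂ] X₂}

/-!
On pure tensors `ψ(X₁ ⊗ X₂)` maps `ι(x ⊗ y)` to `ι(X₁ x ⊗ X₂ y)`: both sides are linear in `X₁` and
`X₂`, and they agree on the monomials `f∘w`, which span `Lᵢ#Ŵᵢ`. Hence `ψ(F₁ ⊗ F₂)` preserves `Λ`
as soon as each `Fᵢ` preserves `Λᵢ`.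

For the left span, `ψ(aX₁ ⊗ bX₂) = ι(a ⊗ b) ψ(X₁ ⊗ X₂)` shows that `L·ψ(F₁ ⊗ F₂)` contains
`ψ(L₁F₁ ⊗ L₂F₂) = ψ((L₁#Ŵ₁) ⊗ (L₂#Ŵ₂))`, in particular every `(w₁, w₂)`; being stable under left
multiplication by `L`, it is all of `L#Ŵ`.
-/

/-- The submonoid `{gen f w | f ∈ L, w ∈ W}` of `End_ℂ(L)`, which generates `skew W`. -/
def genSubmonoid {L : Type*} [Field L] [Algebra ℂ L] (W : Submonoid (L ≃ₐ[ℂ] L)) :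
    Submonoid (Module.End ℂ L) where
  carrier := {X | ∃ (f : L) (w : L ≃ₐ[ℂ] L), w ∈ W ∧ X = gen f w}
  one_mem' := ⟨1, 1, W.one_mem, by ext; simp [gen]⟩
  mul_mem' := by
    rintro _ _ ⟨f, w, hw, rfl⟩ ⟨g, v, hv, rfl⟩
    exact ⟨f * w g, w * v, W.mul_mem hw hv, by ext; simp [gen]⟩

/-- The left `L`-span `L·F` of a set `F` of endomorphisms of `L`. -/
def leftSpan {L : Type*} [Field L] [Algebra ℂ L] (F : Set (Module.End ℂ L)) :
    Submodule ℂ (Module.End ℂ L) :=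
  Submodule.span ℂ {Z | ∃ (f : L) (Y : Module.End ℂ L), Y ∈ F ∧ Z = LinearMap.mulLeft ℂ f ∘ₗ Y}

/-- `F` is a principal flag order with data `(Λ, W, M)`. Since `F` is a subalgebra, the inclusion
`Λ#W ⊆ F` is expressed on the monomials `gen f w`; the inclusion `F ⊆ L#Ŵ` is part of
`leftSpan_eq`. -/
structure IsPrincipalFlagOrder {L : Type*} [Field L] [Algebra ℂ L] (Λ : Subalgebra ℂ L)
    (W : Subgroup (L ≃ₐ[ℂ] L)) (M : Submonoid (L ≃ₐ[ℂ] L))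
    (F : Subalgebra ℂ (Module.End ℂ L)) : Prop where
  gen_mem : ∀ f ∈ Λ, ∀ w ∈ W, gen f w ∈ F
  leftSpan_eq : leftSpan (F : Set (Module.End ℂ L)) = Subalgebra.toSubmodule (skew (genMon W M))
  apply_mem : ∀ X ∈ F, ∀ a ∈ Λ, X a ∈ Λ

section General

variable {R : Type*} [CommSemiring R]

lemma span_image2_tmul_eq_top {M N : Type*} [AddCommMonoid M] [Module R M] [AddCommMonoid N]
    [Module R N] {s : Set M} {t : Set N} (hs : Submodule.span R s = ⊤)
    (ht : Submodule.span R t = ⊤) :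
    Submodule.span R (Set.image2 (· ⊗ₜ[R] ·) s t) = ⊤ := by
  rw [← TensorProduct.map₂_mk_top_top_eq_top, ← hs, ← ht, Submodule.map₂_span_span]
  rfl

lemma span_preimage_coe_eq_top {M : Type*} [AddCommMonoid M] [Module R M] {P : Submodule R M}
    {s : Set M} (hs : Submodule.span R s = P) :
    Submodule.span R ((↑) ⁻¹' s : Set P) = ⊤ := by
  subst hs
  exact Submodule.span_span_coe_preimage

lemma span_image2_tmul_preimage_coe_eq_top {E₁ E₂ : Type*} [Semiring E₁] [Algebra R E₁]
    [Semiring E₂] [Algebra R E₂] {A₁ : Subalgebra R E₁} {A₂ : Subalgebra R E₂}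
    {s₁ : Set E₁} {s₂ : Set E₂} (hs₁ : Submodule.span R s₁ = Subalgebra.toSubmodule A₁)
    (hs₂ : Submodule.span R s₂ = Subalgebra.toSubmodule A₂) :
    Submodule.span R
      (Set.image2 (· ⊗ₜ[R] ·) ((↑) ⁻¹' s₁ : Set A₁) ((↑) ⁻¹' s₂ : Set A₂)) = ⊤ :=
  span_image2_tmul_eq_top (span_preimage_coe_eq_top hs₁) (span_preimage_coe_eq_top hs₂)

lemma submonoid_sup_prod_sup {G H : Type*} [MulOneClass G] [MulOneClass H]
    (S₁ T₁ : Submonoid G) (S₂ T₂ : Submonoid H) :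
    (S₁ ⊔ T₁).prod (S₂ ⊔ T₂) = S₁.prod S₂ ⊔ T₁.prod T₂ := by
  apply le_antisymm
  · rw [Submonoid.prod_le_iff, Submonoid.map_sup, Submonoid.map_sup]
    simp only [Submonoid.map_inl, Submonoid.map_inr]
    exact ⟨sup_le_sup (Submonoid.prod_mono le_rfl bot_le) (Submonoid.prod_mono le_rfl bot_le),
      sup_le_sup (Submonoid.prod_mono bot_le le_rfl) (Submonoid.prod_mono bot_le le_rfl)⟩
  · exact sup_le (Submonoid.prod_mono le_sup_left le_sup_left)
      (Submonoid.prod_mono le_sup_right le_sup_right)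

end General

section SkewMonoidRing

variable {L : Type*} [Field L] [Algebra ℂ L]

lemma mulLeft_mul_gen_one (f : L) (w : L ≃ₐ[ℂ] L) :
    LinearMap.mulLeft ℂ f * gen 1 w = gen f w := by
  ext
  simp [gen]

lemma toSubmodule_skew (W : Submonoid (L ≃ₐ[ℂ] L)) :
    Subalgebra.toSubmodule (skew W) = Submodule.span ℂ (genSubmonoid W : Set (Module.End ℂ L)) := by
  rw [← Submonoid.closure_eq (genSubmonoid W), ← Algebra.adjoin_eq_span]
  rfl

lemma subset_leftSpan (F : Set (Module.End ℂ L)) : F ⊆ leftSpan F := fun Y hY =>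
  Submodule.subset_span ⟨1, Y, hY, by ext; simp⟩

lemma leftSpan_le {F : Set (Module.End ℂ L)} {P : Submodule ℂ (Module.End ℂ L)} :
    leftSpan F ≤ P ↔ ∀ f, ∀ Y ∈ F, LinearMap.mulLeft ℂ f * Y ∈ P := by
  refine Submodule.span_le.trans ⟨fun h f Y hY => h ⟨f, Y, hY, rfl⟩, ?_⟩
  rintro h _ ⟨f, Y, hY, rfl⟩
  exact h f Y hY

lemma mulLeft_mul_mem_leftSpan {F : Set (Module.End ℂ L)} (f : L) {X : Module.End ℂ L}
    (hX : X ∈ leftSpan F) : LinearMap.mulLeft ℂ f * X ∈ leftSpan F := by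
  suffices leftSpan F ≤ (leftSpan F).comap (LinearMap.mulLeft ℂ (LinearMap.mulLeft ℂ f)) from
    this hX
  refine leftSpan_le.2 fun g Y hY => Submodule.subset_span ⟨f * g, Y, hY, ?_⟩
  ext
  simp

lemma genMon_eq_sup (W : Subgroup (L ≃ₐ[ℂ] L)) (M : Submonoid (L ≃ₐ[ℂ] L)) :
    genMon W M = W.toSubmonoid ⊔ M := by
  rw [genMon, Submonoid.closure_union, Submonoid.closure_eq]
  exact congrArg (· ⊔ M) (Submonoid.closure_eq W.toSubmonoid)

end SkewMonoidRing

section Tensor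

variable {L₁ L₂ L : Type*} [Field L₁] [Algebra ℂ L₁] [Field L₂] [Algebra ℂ L₂]
  [Field L] [Algebra ℂ L]

lemma genMon_map_prod (ext : ((L₁ ≃ₐ[ℂ] L₁) × (L₂ ≃ₐ[ℂ] L₂)) →* (L ≃ₐ[ℂ] L))
    (W₁ : Subgroup (L₁ ≃ₐ[ℂ] L₁)) (W₂ : Subgroup (L₂ ≃ₐ[ℂ] L₂))
    (M₁ : Submonoid (L₁ ≃ₐ[ℂ] L₁)) (M₂ : Submonoid (L₂ ≃ₐ[ℂ] L₂)) :
    genMon ((W₁.prod W₂).map ext) ((M₁.prod M₂).map ext) =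
      ((genMon W₁ M₁).prod (genMon W₂ M₂)).map ext := by
  simp only [genMon_eq_sup, submonoid_sup_prod_sup, Submonoid.map_sup]
  rfl

lemma tensorSub_le_iff {Λ₁ : Subalgebra ℂ L₁} {Λ₂ : Subalgebra ℂ L₂} {ι₁ : L₁ →ₐ[ℂ] L}
    {ι₂ : L₂ →ₐ[ℂ] L} {P : Submodule ℂ L} :
    Subalgebra.toSubmodule (tensorSub Λ₁ Λ₂ ι₁ ι₂) ≤ P ↔
      ∀ a ∈ Λ₁, ∀ b ∈ Λ₂, ι₁ a * ι₂ b ∈ P := by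
  rw [tensorSub, Algebra.adjoin_union_coe_submodule, ← Subalgebra.coe_map, ← Subalgebra.coe_map,
    Algebra.adjoin_eq, Algebra.adjoin_eq, Submodule.mul_le]
  simp

lemma mul_mem_tensorSub {Λ₁ : Subalgebra ℂ L₁} {Λ₂ : Subalgebra ℂ L₂} (ι₁ : L₁ →ₐ[ℂ] L)
    (ι₂ : L₂ →ₐ[ℂ] L) {a : L₁} {b : L₂} (ha : a ∈ Λ₁) (hb : b ∈ Λ₂) :
    ι₁ a * ι₂ b ∈ tensorSub Λ₁ Λ₂ ι₁ ι₂ :=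
  tensorSub_le_iff.1 le_rfl a ha b hb

variable {V₁ : Submonoid (L₁ ≃ₐ[ℂ] L₁)} {V₂ : Submonoid (L₂ ≃ₐ[ℂ] L₂)}

lemma pureSpan_mul_le (F₁ : Subalgebra ℂ (Module.End ℂ L₁))
    (F₂ : Subalgebra ℂ (Module.End ℂ L₂)) :
    pureSpan V₁ V₂ (F₁ : Set (Module.End ℂ L₁)) F₂ * pureSpan V₁ V₂ F₁ F₂ ≤
      pureSpan V₁ V₂ F₁ F₂ := by
  rw [pureSpan, Submodule.span_mul_span]
  refine Submodule.span_mono ?_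
  rintro _ ⟨_, ⟨X₁, X₂, hX₁, hX₂, rfl⟩, _, ⟨Y₁, Y₂, hY₁, hY₂, rfl⟩, rfl⟩
  exact ⟨X₁ * Y₁, X₂ * Y₂, F₁.mul_mem hX₁ hY₁, F₂.mul_mem hX₂ hY₂,
    Algebra.TensorProduct.tmul_mul_tmul X₁ Y₁ X₂ Y₂⟩

/-- The image `ψ(F₁ ⊗ F₂)`, as a subalgebra of `End_ℂ(L)`. -/
def tensorImage (ψ : skew V₁ ⊗[ℂ] skew V₂ →ₐ[ℂ] Module.End ℂ L)
    (F₁ : Subalgebra ℂ (Module.End ℂ L₁)) (F₂ : Subalgebra ℂ (Module.End ℂ L₂)) :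
    Subalgebra ℂ (Module.End ℂ L) :=
  ((pureSpan V₁ V₂ F₁ F₂).toSubalgebra
    (Submodule.subset_span ⟨1, 1, F₁.one_mem, F₂.one_mem, rfl⟩)
    fun _ _ hs ht => pureSpan_mul_le F₁ F₂ (Submodule.mul_mem_mul hs ht)).map ψ

lemma map_tmul_mem_tensorImage (ψ : skew V₁ ⊗[ℂ] skew V₂ →ₐ[ℂ] Module.End ℂ L)
    {F₁ : Subalgebra ℂ (Module.End ℂ L₁)} {F₂ : Subalgebra ℂ (Module.End ℂ L₂)}
    {X₁ : skew V₁} {X₂ : skew V₂} (hX₁ : (X₁ : Module.End ℂ L₁) ∈ F₁)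
    (hX₂ : (X₂ : Module.End ℂ L₂) ∈ F₂) : ψ (X₁ ⊗ₜ X₂) ∈ tensorImage ψ F₁ F₂ :=
  ⟨_, Submodule.subset_span ⟨X₁, X₂, hX₁, hX₂, rfl⟩, rfl⟩

lemma tensorImage_le_iff {ψ : skew V₁ ⊗[ℂ] skew V₂ →ₐ[ℂ] Module.End ℂ L}
    {F₁ : Subalgebra ℂ (Module.End ℂ L₁)} {F₂ : Subalgebra ℂ (Module.End ℂ L₂)}
    {P : Submodule ℂ (Module.End ℂ L)} :
    Subalgebra.toSubmodule (tensorImage ψ F₁ F₂) ≤ P ↔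
      ∀ (X₁ : skew V₁) (X₂ : skew V₂), (X₁ : Module.End ℂ L₁) ∈ F₁ →
        (X₂ : Module.End ℂ L₂) ∈ F₂ → ψ (X₁ ⊗ₜ X₂) ∈ P := by
  refine ⟨fun h X₁ X₂ hX₁ hX₂ => h (map_tmul_mem_tensorImage ψ hX₁ hX₂), ?_⟩
  rintro h _ ⟨t, ht, rfl⟩
  refine (Submodule.span_le (p := P.comap ψ.toLinearMap)).2 ?_ ht
  rintro _ ⟨X₁, X₂, hX₁, hX₂, rfl⟩
  exact h X₁ X₂ hX₁ hX₂

/-- `ψ` is the canonical homomorphism `(L₁#V₁) ⊗ (L₂#V₂) → L#(V₁ × V₂)`, given on monomials by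
`(f∘w₁) ⊗ (g∘w₂) ↦ ι(f ⊗ g)∘(w₁, w₂)`; the pair `(w₁, w₂)` acts on `L` through `ext`, and
`ι(f ⊗ g) = ι₁ f * ι₂ g`. -/
def IsSkewTensorHom (ι₁ : L₁ →ₐ[ℂ] L) (ι₂ : L₂ →ₐ[ℂ] L)
    (ext : ((L₁ ≃ₐ[ℂ] L₁) × (L₂ ≃ₐ[ℂ] L₂)) →* (L ≃ₐ[ℂ] L))
    (ψ : skew V₁ ⊗[ℂ] skew V₂ →ₐ[ℂ] Module.End ℂ L) : Prop :=
  ∀ (a : L₁) (b : L₂) (w₁ : L₁ ≃ₐ[ℂ] L₁) (w₂ : L₂ ≃ₐ[ℂ] L₂) (h₁ : w₁ ∈ V₁) (h₂ : w₂ ∈ V₂),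
    ψ (⟨gen a w₁, gen_mem_skew a h₁⟩ ⊗ₜ[ℂ] ⟨gen b w₂, gen_mem_skew b h₂⟩) =
      gen (ι₁ a * ι₂ b) (ext (w₁, w₂))

namespace IsSkewTensorHom

variable {ι₁ : L₁ →ₐ[ℂ] L} {ι₂ : L₂ →ₐ[ℂ] L}
  {ext : ((L₁ ≃ₐ[ℂ] L₁) × (L₂ ≃ₐ[ℂ] L₂)) →* (L ≃ₐ[ℂ] L)}
  {ψ : skew V₁ ⊗[ℂ] skew V₂ →ₐ[ℂ] Module.End ℂ L}

lemma map_mem_skew (hψ : IsSkewTensorHom ι₁ ι₂ ext ψ) (t : skew V₁ ⊗[ℂ] skew V₂) :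
    ψ t ∈ skew ((V₁.prod V₂).map ext) := by
  suffices ⊤ ≤ (Subalgebra.toSubmodule (skew ((V₁.prod V₂).map ext))).comap ψ.toLinearMap from
    this Submodule.mem_top
  rw [← span_image2_tmul_preimage_coe_eq_top (toSubmodule_skew V₁).symm (toSubmodule_skew V₂).symm,
    Submodule.span_le]
  rintro _ ⟨⟨_, _⟩, ⟨a, w₁, h₁, rfl⟩, ⟨_, _⟩, ⟨b, w₂, h₂, rfl⟩, rfl⟩
  have hw : ext (w₁, w₂) ∈ (V₁.prod V₂).map ext := ⟨(w₁, w₂), ⟨h₁, h₂⟩, rfl⟩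
  have hgen := gen_mem_skew (ι₁ a * ι₂ b) hw
  rwa [← hψ a b w₁ w₂ h₁ h₂] at hgen

lemma map_tmul_apply (hψ : IsSkewTensorHom ι₁ ι₂ ext ψ)
    (hext : ∀ (p : (L₁ ≃ₐ[ℂ] L₁) × (L₂ ≃ₐ[ℂ] L₂)) (f : L₁) (g : L₂),
      ext p (ι₁ f * ι₂ g) = ι₁ (p.1 f) * ι₂ (p.2 g))
    (X₁ : skew V₁) (X₂ : skew V₂) (x : L₁) (y : L₂) :
    ψ (X₁ ⊗ₜ X₂) (ι₁ x * ι₂ y) =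
      ι₁ ((X₁ : Module.End ℂ L₁) x) * ι₂ ((X₂ : Module.End ℂ L₂) y) := by
  let ev₁ : skew V₁ →ₗ[ℂ] L := ι₁.toLinearMap ∘ₗ LinearMap.applyₗ x ∘ₗ (skew V₁).val.toLinearMap
  let ev₂ : skew V₂ →ₗ[ℂ] L := ι₂.toLinearMap ∘ₗ LinearMap.applyₗ y ∘ₗ (skew V₂).val.toLinearMap
  suffices LinearMap.applyₗ (ι₁ x * ι₂ y) ∘ₗ ψ.toLinearMap =
      LinearMap.mul' ℂ L ∘ₗ TensorProduct.map ev₁ ev₂ from LinearMap.congr_fun this (X₁ ⊗ₜ X₂)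
  refine LinearMap.ext_on (span_image2_tmul_preimage_coe_eq_top (toSubmodule_skew V₁).symm
    (toSubmodule_skew V₂).symm) ?_
  rintro _ ⟨⟨_, _⟩, ⟨a, w₁, h₁, rfl⟩, ⟨_, _⟩, ⟨b, w₂, h₂, rfl⟩, rfl⟩
  calc ψ (⟨gen a w₁, gen_mem_skew a h₁⟩ ⊗ₜ ⟨gen b w₂, gen_mem_skew b h₂⟩) (ι₁ x * ι₂ y)
      = ι₁ a * ι₂ b * ext (w₁, w₂) (ι₁ x * ι₂ y) := by rw [hψ a b w₁ w₂ h₁ h₂]; rfl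
    _ = ι₁ a * ι₁ (w₁ x) * (ι₂ b * ι₂ (w₂ y)) := by rw [hext, mul_mul_mul_comm]
    _ = ι₁ (gen a w₁ x) * ι₂ (gen b w₂ y) := by rw [← map_mul, ← map_mul]; rfl

lemma map_gen_one_mul_tmul (hψ : IsSkewTensorHom ι₁ ι₂ ext ψ) (a : L₁) (b : L₂)
    (X₁ : skew V₁) (X₂ : skew V₂) :
    ψ ((⟨gen a 1, gen_mem_skew a V₁.one_mem⟩ * X₁) ⊗ₜ
        (⟨gen b 1, gen_mem_skew b V₂.one_mem⟩ * X₂)) =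
      LinearMap.mulLeft ℂ (ι₁ a * ι₂ b) * ψ (X₁ ⊗ₜ X₂) := by
  rw [← Algebra.TensorProduct.tmul_mul_tmul, map_mul, hψ a b 1 1 V₁.one_mem V₂.one_mem,
    ← Prod.one_eq_mk, map_one]
  rfl

variable {F₁ : Subalgebra ℂ (Module.End ℂ L₁)} {F₂ : Subalgebra ℂ (Module.End ℂ L₂)}

lemma map_mem_leftSpan_tensorImage (hψ : IsSkewTensorHom ι₁ ι₂ ext ψ)
    (hF₁ : leftSpan (F₁ : Set (Module.End ℂ L₁)) = Subalgebra.toSubmodule (skew V₁))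
    (hF₂ : leftSpan (F₂ : Set (Module.End ℂ L₂)) = Subalgebra.toSubmodule (skew V₂))
    (t : skew V₁ ⊗[ℂ] skew V₂) :
    ψ t ∈ leftSpan (tensorImage ψ F₁ F₂ : Set (Module.End ℂ L)) := by
  suffices ⊤ ≤ (leftSpan (tensorImage ψ F₁ F₂ : Set (Module.End ℂ L))).comap ψ.toLinearMap from
    this Submodule.mem_top
  rw [← span_image2_tmul_preimage_coe_eq_top hF₁ hF₂, Submodule.span_le]
  rintro _ ⟨⟨_, _⟩, ⟨a, Y₁, hY₁, rfl⟩, ⟨_, _⟩, ⟨b, Y₂, hY₂, rfl⟩, rfl⟩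
  let X₁ : skew V₁ := ⟨Y₁, hF₁.le (subset_leftSpan _ hY₁)⟩
  let X₂ : skew V₂ := ⟨Y₂, hF₂.le (subset_leftSpan _ hY₂)⟩
  exact Submodule.subset_span ⟨ι₁ a * ι₂ b, ψ (X₁ ⊗ₜ X₂),
    map_tmul_mem_tensorImage ψ hY₁ hY₂, hψ.map_gen_one_mul_tmul a b X₁ X₂⟩

lemma leftSpan_tensorImage (hψ : IsSkewTensorHom ι₁ ι₂ ext ψ)
    (hF₁ : leftSpan (F₁ : Set (Module.End ℂ L₁)) = Subalgebra.toSubmodule (skew V₁))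
    (hF₂ : leftSpan (F₂ : Set (Module.End ℂ L₂)) = Subalgebra.toSubmodule (skew V₂)) :
    leftSpan (tensorImage ψ F₁ F₂ : Set (Module.End ℂ L)) =
      Subalgebra.toSubmodule (skew ((V₁.prod V₂).map ext)) := by
  apply le_antisymm
  · rw [leftSpan_le]
    rintro f _ ⟨t, -, rfl⟩
    exact Subalgebra.mul_mem _ (gen_mem_skew f (Submonoid.one_mem _)) (hψ.map_mem_skew t)
  · rw [toSubmodule_skew, Submodule.span_le]
    rintro _ ⟨f, _, ⟨⟨w₁, w₂⟩, ⟨h₁, h₂⟩, rfl⟩, rfl⟩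
    have hw : gen 1 (ext (w₁, w₂)) ∈ leftSpan (tensorImage ψ F₁ F₂ : Set (Module.End ℂ L)) := by
      simpa [hψ 1 1 w₁ w₂ h₁ h₂] using hψ.map_mem_leftSpan_tensorImage hF₁ hF₂
        (⟨gen 1 w₁, gen_mem_skew 1 h₁⟩ ⊗ₜ ⟨gen 1 w₂, gen_mem_skew 1 h₂⟩)
    exact mulLeft_mul_gen_one f (ext (w₁, w₂)) ▸ mulLeft_mul_mem_leftSpan f hw

lemma gen_mem_tensorImage (hψ : IsSkewTensorHom ι₁ ι₂ ext ψ)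
    {Λ₁ : Subalgebra ℂ L₁} {Λ₂ : Subalgebra ℂ L₂} {w₁ : L₁ ≃ₐ[ℂ] L₁} {w₂ : L₂ ≃ₐ[ℂ] L₂}
    (h₁ : w₁ ∈ V₁) (h₂ : w₂ ∈ V₂) (hF₁ : ∀ a ∈ Λ₁, gen a w₁ ∈ F₁)
    (hF₂ : ∀ b ∈ Λ₂, gen b w₂ ∈ F₂) {f : L} (hf : f ∈ tensorSub Λ₁ Λ₂ ι₁ ι₂) :
    gen f (ext (w₁, w₂)) ∈ tensorImage ψ F₁ F₂ := by
  let genₗ : L →ₗ[ℂ] Module.End ℂ L :=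
    LinearMap.mulRight ℂ (ext (w₁, w₂)).toLinearMap ∘ₗ (Algebra.lmul ℂ L).toLinearMap
  suffices Subalgebra.toSubmodule (tensorSub Λ₁ Λ₂ ι₁ ι₂) ≤
      (Subalgebra.toSubmodule (tensorImage ψ F₁ F₂)).comap genₗ from this hf
  refine tensorSub_le_iff.2 fun a ha b hb => ?_
  have hab := map_tmul_mem_tensorImage (X₁ := ⟨gen a w₁, gen_mem_skew a h₁⟩)
    (X₂ := ⟨gen b w₂, gen_mem_skew b h₂⟩) ψ (hF₁ a ha) (hF₂ b hb)
  rwa [hψ a b w₁ w₂ h₁ h₂] at hab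

lemma tensorImage_apply_mem (hψ : IsSkewTensorHom ι₁ ι₂ ext ψ)
    (hext : ∀ (p : (L₁ ≃ₐ[ℂ] L₁) × (L₂ ≃ₐ[ℂ] L₂)) (f : L₁) (g : L₂),
      ext p (ι₁ f * ι₂ g) = ι₁ (p.1 f) * ι₂ (p.2 g))
    {Λ₁ : Subalgebra ℂ L₁} {Λ₂ : Subalgebra ℂ L₂}
    (hF₁ : ∀ X ∈ F₁, ∀ a ∈ Λ₁, X a ∈ Λ₁) (hF₂ : ∀ X ∈ F₂, ∀ b ∈ Λ₂, X b ∈ Λ₂)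
    {Z : Module.End ℂ L} (hZ : Z ∈ tensorImage ψ F₁ F₂) {x : L}
    (hx : x ∈ tensorSub Λ₁ Λ₂ ι₁ ι₂) : Z x ∈ tensorSub Λ₁ Λ₂ ι₁ ι₂ := by
  let Λ := Subalgebra.toSubmodule (tensorSub Λ₁ Λ₂ ι₁ ι₂)
  suffices Λ ≤ Λ.comap Z from this hx
  refine tensorSub_le_iff.2 fun a ha b hb => ?_
  suffices Subalgebra.toSubmodule (tensorImage ψ F₁ F₂) ≤
      Λ.comap (LinearMap.applyₗ (ι₁ a * ι₂ b)) from this hZ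
  refine tensorImage_le_iff.2 fun X₁ X₂ hX₁ hX₂ => ?_
  have hab := mul_mem_tensorSub ι₁ ι₂ (hF₁ _ hX₁ a ha) (hF₂ _ hX₂ b hb)
  rwa [← hψ.map_tmul_apply hext X₁ X₂ a b] at hab

end IsSkewTensorHom

theorem principal_flag_orders_closed_under_tensor_general
    {Λ₁ : Subalgebra ℂ L₁} {Λ₂ : Subalgebra ℂ L₂}
    {W₁ : Subgroup (L₁ ≃ₐ[ℂ] L₁)} {W₂ : Subgroup (L₂ ≃ₐ[ℂ] L₂)}
    {M₁ : Submonoid (L₁ ≃ₐ[ℂ] L₁)} {M₂ : Submonoid (L₂ ≃ₐ[ℂ] L₂)}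
    {F₁ : Subalgebra ℂ (Module.End ℂ L₁)} {F₂ : Subalgebra ℂ (Module.End ℂ L₂)}
    (hF₁ : IsPrincipalFlagOrder Λ₁ W₁ M₁ F₁) (hF₂ : IsPrincipalFlagOrder Λ₂ W₂ M₂ F₂)
    {ι₁ : L₁ →ₐ[ℂ] L} {ι₂ : L₂ →ₐ[ℂ] L}
    {ext : ((L₁ ≃ₐ[ℂ] L₁) × (L₂ ≃ₐ[ℂ] L₂)) →* (L ≃ₐ[ℂ] L)}
    (hext : ∀ (p : (L₁ ≃ₐ[ℂ] L₁) × (L₂ ≃ₐ[ℂ] L₂)) (f : L₁) (g : L₂),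
      ext p (ι₁ f * ι₂ g) = ι₁ (p.1 f) * ι₂ (p.2 g))
    {ψ : skew (genMon W₁ M₁) ⊗[ℂ] skew (genMon W₂ M₂) →ₐ[ℂ] Module.End ℂ L}
    (hψ : IsSkewTensorHom ι₁ ι₂ ext ψ) :
    IsPrincipalFlagOrder (tensorSub Λ₁ Λ₂ ι₁ ι₂) ((W₁.prod W₂).map ext) ((M₁.prod M₂).map ext)
      (tensorImage ψ F₁ F₂) where
  gen_mem := by
    rintro f hf _ ⟨⟨w₁, w₂⟩, ⟨hw₁, hw₂⟩, rfl⟩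
    exact hψ.gen_mem_tensorImage (Submonoid.subset_closure (Or.inl hw₁))
      (Submonoid.subset_closure (Or.inl hw₂)) (fun a ha => hF₁.gen_mem a ha w₁ hw₁)
      (fun b hb => hF₂.gen_mem b hb w₂ hw₂) hf
  leftSpan_eq := by
    rw [genMon_map_prod]
    exact hψ.leftSpan_tensorImage hF₁.leftSpan_eq hF₂.leftSpan_eq
  apply_mem _ hZ _ hx := hψ.tensorImage_apply_mem hext hF₁.apply_mem hF₂.apply_mem hZ hx

end Tensor

theorem principal_flag_orders_closed_under_tensor
    {L₁ L₂ L : Type*} [Field L₁] [Algebra ℂ L₁] [Field L₂] [Algebra ℂ L₂]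
    [Field L] [Algebra ℂ L]
    (Λ₁ : Subalgebra ℂ L₁) (Λ₂ : Subalgebra ℂ L₂)
    [IsFractionRing Λ₁ L₁] [IsFractionRing Λ₂ L₂]
    -- Λᵢ Noetherian
    (hnoeth₁ : IsNoetherianRing Λ₁) (hnoeth₂ : IsNoetherianRing Λ₂)
    -- the finite groups Wᵢ of automorphisms
    (W₁ : Subgroup (L₁ ≃ₐ[ℂ] L₁)) (W₂ : Subgroup (L₂ ≃ₐ[ℂ] L₂))
    (hW₁fin : (W₁ : Set (L₁ ≃ₐ[ℂ] L₁)).Finite) (hW₂fin : (W₂ : Set (L₂ ≃ₐ[ℂ] L₂)).Finite)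
    (hW₁ : ∀ w ∈ W₁, ∀ x : L₁, x ∈ Λ₁ ↔ w x ∈ Λ₁)
    (hW₂ : ∀ w ∈ W₂, ∀ x : L₂, x ∈ Λ₂ ↔ w x ∈ Λ₂)
    -- the monoids 𝓜ᵢ of automorphisms, invariant under conjugation by Wᵢ
    (M₁ : Submonoid (L₁ ≃ₐ[ℂ] L₁)) (M₂ : Submonoid (L₂ ≃ₐ[ℂ] L₂))
    (hM₁ : ∀ μ ∈ M₁, ∀ x : L₁, x ∈ Λ₁ ↔ μ x ∈ Λ₁)
    (hM₂ : ∀ μ ∈ M₂, ∀ x : L₂, x ∈ Λ₂ ↔ μ x ∈ Λ₂)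
    (hinv₁ : ∀ w ∈ W₁, ∀ μ ∈ M₁, w * μ * w⁻¹ ∈ M₁)
    (hinv₂ : ∀ w ∈ W₂, ∀ μ ∈ M₂, w * μ * w⁻¹ ∈ M₂)
    -- F₁ and F₂ are principal flag orders with data (Λᵢ, Wᵢ, 𝓜ᵢ)
    (F₁ : Subalgebra ℂ (Module.End ℂ L₁)) (F₂ : Subalgebra ℂ (Module.End ℂ L₂))
    (hF₁skew : F₁ ≤ skew (genMon W₁ M₁))
    (hF₂skew : F₂ ≤ skew (genMon W₂ M₂))
    (hF₁i : ∀ f ∈ Λ₁, ∀ w ∈ W₁, gen f w ∈ F₁)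
    (hF₂i : ∀ f ∈ Λ₂, ∀ w ∈ W₂, gen f w ∈ F₂)
    (hF₁ii : Submodule.span ℂ
        {Z : Module.End ℂ L₁ | ∃ (f : L₁) (Y : Module.End ℂ L₁), Y ∈ F₁ ∧
          Z = (LinearMap.mulLeft ℂ f) ∘ₗ Y} =
      Subalgebra.toSubmodule
        (skew (genMon W₁ M₁)))
    (hF₂ii : Submodule.span ℂ
        {Z : Module.End ℂ L₂ | ∃ (f : L₂) (Y : Module.End ℂ L₂), Y ∈ F₂ ∧
          Z = (LinearMap.mulLeft ℂ f) ∘ₗ Y} =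
      Subalgebra.toSubmodule
        (skew (genMon W₂ M₂)))
    (hF₁iii : ∀ X ∈ F₁, ∀ a ∈ Λ₁, X a ∈ Λ₁)
    (hF₂iii : ∀ X ∈ F₂, ∀ a ∈ Λ₂, X a ∈ Λ₂)
    -- the canonical realization of Λ₁ ⊗ Λ₂ inside L = Frac(Λ₁ ⊗ Λ₂)
    (ι₁ : L₁ →ₐ[ℂ] L) (ι₂ : L₂ →ₐ[ℂ] L)
    (hι : Function.Injective (Algebra.TensorProduct.productMap ι₁ ι₂))
    (hfrac : ∀ x : L, ∃ a ∈ tensorSub Λ₁ Λ₂ ι₁ ι₂, ∃ b ∈ tensorSub Λ₁ Λ₂ ι₁ ι₂,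
      b ≠ 0 ∧ x = a / b)
    (ext : ((L₁ ≃ₐ[ℂ] L₁) × (L₂ ≃ₐ[ℂ] L₂)) →* (L ≃ₐ[ℂ] L))
    (hext : ∀ (p : (L₁ ≃ₐ[ℂ] L₁) × (L₂ ≃ₐ[ℂ] L₂)) (f : L₁) (g : L₂),
      ext p (ι₁ f * ι₂ g) = ι₁ (p.1 f) * ι₂ (p.2 g))
    -- the canonical embedding ψ
    (ψ : (↥(skew (genMon W₁ M₁)) ⊗[ℂ]
          ↥(skew (genMon W₂ M₂)))
        →ₐ[ℂ] Module.End ℂ L)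
    (hψ : ∀ (a : L₁) (b : L₂) (w₁ : L₁ ≃ₐ[ℂ] L₁) (w₂ : L₂ ≃ₐ[ℂ] L₂)
        (h₁ : w₁ ∈ genMon W₁ M₁)
        (h₂ : w₂ ∈ genMon W₂ M₂),
      ψ (⟨gen a w₁, gen_mem_skew a h₁⟩ ⊗ₜ[ℂ] ⟨gen b w₂, gen_mem_skew b h₂⟩)
        = gen (ι₁ a * ι₂ b) (ext (w₁, w₂))) :
    -- ψ(F₁ ⊗ F₂) is a principal flag order with data (Λ₁⊗Λ₂, W₁×W₂, 𝓜₁×𝓜₂):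
    -- it is a unital subalgebra ...
    ((1 : Module.End ℂ L) ∈ Submodule.map ψ.toLinearMap (pureSpan (genMon W₁ M₁) (genMon W₂ M₂) ↑F₁ ↑F₂)) ∧
    (∀ Y ∈ Submodule.map ψ.toLinearMap (pureSpan (genMon W₁ M₁) (genMon W₂ M₂) ↑F₁ ↑F₂),
      ∀ Z ∈ Submodule.map ψ.toLinearMap (pureSpan (genMon W₁ M₁) (genMon W₂ M₂) ↑F₁ ↑F₂),
        Y * Z ∈ Submodule.map ψ.toLinearMap (pureSpan (genMon W₁ M₁) (genMon W₂ M₂) ↑F₁ ↑F₂)) ∧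
    -- ... containing Λ#(W₁×W₂) ...
    (∀ f ∈ tensorSub Λ₁ Λ₂ ι₁ ι₂, ∀ w₁ ∈ W₁, ∀ w₂ ∈ W₂,
      gen f (ext (w₁, w₂)) ∈ Submodule.map ψ.toLinearMap (pureSpan (genMon W₁ M₁) (genMon W₂ M₂) ↑F₁ ↑F₂)) ∧
    -- ... whose left L-span is all of L#(Ŵ₁×Ŵ₂) ...
    (Submodule.span ℂ
        {Z : Module.End ℂ L | ∃ (f : L) (Y : Module.End ℂ L),
          Y ∈ Submodule.map ψ.toLinearMap (pureSpan (genMon W₁ M₁) (genMon W₂ M₂) ↑F₁ ↑F₂) ∧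
          Z = (LinearMap.mulLeft ℂ f) ∘ₗ Y} =
      Subalgebra.toSubmodule (skew (Submonoid.map ext
        ((genMon W₁ M₁).prod
          (genMon W₂ M₂))))) ∧
    -- ... and all of whose elements preserve Λ = Λ₁ ⊗ Λ₂:
    (∀ Z ∈ Submodule.map ψ.toLinearMap (pureSpan (genMon W₁ M₁) (genMon W₂ M₂) ↑F₁ ↑F₂),
      ∀ a ∈ tensorSub Λ₁ Λ₂ ι₁ ι₂, Z a ∈ tensorSub Λ₁ Λ₂ ι₁ ι₂) := by
  have hF := principal_flag_orders_closed_under_tensor_general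
    ⟨hF₁i, hF₁ii, hF₁iii⟩ ⟨hF₂i, hF₂ii, hF₂iii⟩ hext hψ
  exact ⟨(tensorImage ψ F₁ F₂).one_mem, fun _ hY _ hZ => (tensorImage ψ F₁ F₂).mul_mem hY hZ,
    fun f hf w₁ hw₁ w₂ hw₂ => hF.gen_mem f hf _ ⟨(w₁, w₂), ⟨hw₁, hw₂⟩, rfl⟩,
    genMon_map_prod ext W₁ W₂ M₁ M₂ ▸ hF.leftSpan_eq, hF.apply_mem⟩
end
end
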